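/- arXiv:1701.04699 — 5 statements merged into one kernel-verified Lean document; each statement's English description precedes it below -/
import Mathlib

section
/- Let Γ ⊂ ℝ^d be a Delone set. Then there exist positive constants c₁, c₂ such that for every nonnegative continuous function f : ℝ^d → ℝ with compact support one has c₁·∫_{ℝ^d} f(x) dx ≤ liminf_{ε→0⁺} Σ_{z∈Γ} ε^d f(εz) ≤ limsup_{ε→0⁺} Σ_{z∈Γ} ε^d f(εz) ≤ c₂·∫_{ℝ^d} f(x) dx. -/
open Filter MeasureTheory Set

/-!
Let `B z` be the ball of radius `ε ρ` around `ε z`, whose volume is `ε ^ d` times a constant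
depending only on `ρ`. Up to this constant the Riemann sum is `∑ vol (B z) * f (ε z)`, and for
small `ε` uniform continuity makes `f` within `η` of `f (ε z)` on `B z`. If every point of the
space is within `ρ` of `Γ`, the sets `B z` cover the space and the sum is at least `∫ f` up to an
error `O(η)`; if every ball of radius `ρ` contains at most one point of `Γ`, they are disjoint and
the sum is at most `∫ f` up to an error `O(η)`.
-/

open Metric Module Topology

section StepFunctions

variable {α ι : Type*} [MeasurableSpace α] {μ : Measure α} {f : α → ℝ} {K : Set α}
  {T : Finset ι} {s : ι → Set α} {a : ι → ℝ} {η : ℝ}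

theorem integral_le_sum_measureReal_mul_add (hf : Integrable f μ)
    (hK : MeasurableSet K) (hμK : μ K ≠ ⊤) (hfK : Function.support f ⊆ K)
    (hs : ∀ i ∈ T, MeasurableSet (s i)) (hμs : ∀ i ∈ T, μ (s i) ≠ ⊤)
    (ha : ∀ i ∈ T, 0 ≤ a i) (hcover : ∀ x ∈ K, ∃ i ∈ T, x ∈ s i ∧ f x ≤ a i + η) :
    ∫ x, f x ∂μ ≤ ∑ i ∈ T, μ.real (s i) * a i + μ.real K * η := by
  have hint_s : ∀ i ∈ T, Integrable ((s i).indicator fun _ ↦ a i) μ := fun i hi ↦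
    (integrable_indicator_iff (hs i hi)).2 (integrableOn_const (hμs i hi))
  have hint_K : Integrable (K.indicator fun _ ↦ η) μ :=
    (integrable_indicator_iff hK).2 (integrableOn_const hμK)
  have hnonneg (x : α) : ∀ i ∈ T, 0 ≤ (s i).indicator (fun _ ↦ a i) x := fun i hi ↦
    indicator_nonneg (fun _ _ ↦ ha i hi) x
  calc ∫ x, f x ∂μ
      ≤ ∫ x, (∑ i ∈ T, (s i).indicator (fun _ ↦ a i) x + K.indicator (fun _ ↦ η) x) ∂μ := by
        refine integral_mono hf ((integrable_finsetSum T hint_s).add hint_K) fun x ↦ ?_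
        by_cases hx : x ∈ K
        · obtain ⟨i, hi, hxi, hfx⟩ := hcover x hx
          have hsingle := Finset.single_le_sum (hnonneg x) hi
          rw [indicator_of_mem hxi] at hsingle
          simp only [indicator_of_mem hx]
          linarith
        · simpa [hx, Function.notMem_support.1 (notMem_subset hfK hx)]
            using Finset.sum_nonneg (hnonneg x)
    _ = ∑ i ∈ T, μ.real (s i) * a i + μ.real K * η := by
        rw [integral_add (integrable_finsetSum T hint_s) hint_K, integral_finsetSum T hint_s,
          integral_indicator_const η hK, smul_eq_mul]
        exact congrArg (· + _) (Finset.sum_congr rfl fun i hi ↦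
          integral_indicator_const (a i) (hs i hi))

theorem sum_measureReal_mul_le_integral_add (hf : Integrable f μ) (hf₀ : 0 ≤ f)
    (hμK : μ K ≠ ⊤) (hη : 0 ≤ η)
    (hs : ∀ i ∈ T, MeasurableSet (s i)) (hsK : ∀ i ∈ T, s i ⊆ K)
    (hdisj : (T : Set ι).PairwiseDisjoint s) (hle : ∀ i ∈ T, ∀ x ∈ s i, a i ≤ f x + η) :
    ∑ i ∈ T, μ.real (s i) * a i ≤ ∫ x, f x ∂μ + μ.real K * η := by
  have hint : IntegrableOn (fun x ↦ f x + η) K μ :=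
    hf.integrableOn.add (integrableOn_const hμK)
  calc ∑ i ∈ T, μ.real (s i) * a i
      ≤ ∑ i ∈ T, ∫ x in s i, (f x + η) ∂μ := Finset.sum_le_sum fun i hi ↦ by
        have hμs : μ (s i) ≠ ⊤ := measure_ne_top_of_subset (hsK i hi) hμK
        rw [← smul_eq_mul, ← setIntegral_const]
        exact setIntegral_mono_on (integrableOn_const hμs) (hint.mono_set (hsK i hi)) (hs i hi)
          (hle i hi)
    _ = ∫ x in ⋃ i ∈ T, s i, (f x + η) ∂μ :=
        (integral_biUnion_finset T hs hdisj fun i hi ↦ hint.mono_set (hsK i hi)).symm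
    _ ≤ ∫ x in K, (f x + η) ∂μ :=
        setIntegral_mono_set hint (.of_forall fun x ↦ add_nonneg (hf₀ x) hη)
          (iUnion₂_subset hsK).eventuallyLE
    _ = ∫ x in K, f x ∂μ + μ.real K * η := by
        rw [integral_add hf.integrableOn (integrableOn_const hμK), setIntegral_const, smul_eq_mul]
    _ ≤ ∫ x, f x ∂μ + μ.real K * η := by
        exact add_le_add_left (setIntegral_le_integral hf (.of_forall hf₀)) _

end StepFunctions

theorem finite_inter_isCompact_of_subsingleton_inter_ball {X : Type*} [PseudoMetricSpace X]
    {Γ K : Set X} {r : ℝ} (hr : 0 < r) (hΓ : ∀ x, (Γ ∩ ball x r).Subsingleton)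
    (hK : IsCompact K) : (Γ ∩ K).Finite := by
  obtain ⟨t, -, ht, hKt⟩ := hK.finite_cover_balls hr
  refine (ht.biUnion fun x _ ↦ (hΓ x).finite).subset ?_
  rw [← inter_iUnion₂]
  exact inter_subset_inter_right Γ hKt

theorem measureReal_ball_pos {X : Type*} [PseudoMetricSpace X] [ProperSpace X]
    [MeasurableSpace X] (μ : Measure X) [μ.IsOpenPosMeasure] [IsFiniteMeasureOnCompacts μ]
    (x : X) {r : ℝ} (hr : 0 < r) : 0 < μ.real (ball x r) :=
  ENNReal.toReal_pos (measure_ball_pos μ x hr).ne' measure_ball_lt_top.ne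

theorem eventually_nhdsGT_zero_mul_lt (r : ℝ) {δ : ℝ} (hδ : 0 < δ) :
    ∀ᶠ ε : ℝ in 𝓝[>] 0, ε * r < δ := by
  have h : Tendsto (fun ε : ℝ ↦ ε * r) (𝓝[>] 0) (𝓝 (0 * r)) :=
    (tendsto_id.mul_const r).mono_left nhdsWithin_le_nhds
  exact h.eventually_lt_const (by simpa using hδ)

theorem eventually_abs_sub_lt_of_uniformContinuous {X : Type*} [PseudoMetricSpace X] {f : X → ℝ}
    (hf : UniformContinuous f) (r : ℝ) {η : ℝ} (hη : 0 < η) :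
    ∀ᶠ ε : ℝ in 𝓝[>] 0, ∀ y, ∀ x ∈ ball y (ε * r), |f x - f y| < η := by
  obtain ⟨δ, hδ, hfδ⟩ := Metric.uniformContinuous_iff.1 hf η hη
  filter_upwards [eventually_nhdsGT_zero_mul_lt r hδ] with ε hε y x hx
  exact hfδ ((mem_ball.1 hx).trans hε)

section RiemannSum

variable {E : Type*} [NormedAddCommGroup E] [NormedSpace ℝ E] {Γ K : Set E} {f : E → ℝ}
  {r ε c : ℝ}

theorem mem_ball_smul_mul_iff (hε : 0 < ε) {x z : E} :
    x ∈ ball (ε • z) (ε * r) ↔ ε⁻¹ • x ∈ ball z r := by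
  rw [← mem_smul_set_iff_inv_smul_mem₀ hε.ne', _root_.smul_ball hε.ne', Real.norm_of_nonneg hε.le]

theorem exists_finset_mem_iff_smul_mem (hΓ : ∀ K, IsCompact K → (Γ ∩ K).Finite)
    (hε : ε ≠ 0) (hK : IsCompact K) : ∃ T : Finset E, ∀ z, z ∈ T ↔ z ∈ Γ ∧ ε • z ∈ K := by
  have hfin := hΓ _ ((Homeomorph.smulOfNeZero ε hε).isCompact_preimage.2 hK)
  exact ⟨hfin.toFinset, fun z ↦ hfin.mem_toFinset⟩

/-- The Riemann sum `∑_{z ∈ Γ} ε ^ d * f (ε z)` of `f` over the rescaled set `ε Γ`, with `d` the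
dimension of `E`. Being a `finsum`, it is `0` when infinitely many terms are nonzero. -/
noncomputable def riemannSum (Γ : Set E) (f : E → ℝ) (ε : ℝ) : ℝ :=
  ∑ᶠ z ∈ Γ, ε ^ finrank ℝ E * f (ε • z)

variable [MeasurableSpace E] [BorelSpace E] [FiniteDimensional ℝ E]
  (μ : Measure E) [μ.IsAddHaarMeasure]

theorem measureReal_ball_smul_mul (hε : 0 < ε) (z : E) :
    μ.real (ball (ε • z) (ε * r)) = ε ^ finrank ℝ E * μ.real (ball 0 r) := by
  rw [measureReal_def, Measure.addHaar_ball_mul_of_pos μ _ hε, ENNReal.toReal_mul,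
    ENNReal.toReal_ofReal (by positivity), measureReal_def]

theorem measureReal_ball_mul_riemannSum (hε : 0 < ε) (hfK : Function.support f ⊆ K)
    {T : Finset E} (hT : ∀ z, z ∈ T ↔ z ∈ Γ ∧ ε • z ∈ K) :
    μ.real (ball 0 r) * riemannSum Γ f ε =
      ∑ z ∈ T, μ.real (ball (ε • z) (ε * r)) * f (ε • z) := by
  have hsum : riemannSum Γ f ε = ∑ z ∈ T, ε ^ finrank ℝ E * f (ε • z) := by
    refine finsum_mem_eq_sum_of_inter_support_eq _ (Set.ext fun z ↦ and_congr_left fun hz ↦ ?_)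
    rw [Finset.mem_coe, hT z, iff_self_and]
    exact fun _ ↦ hfK (right_ne_zero_of_mul hz)
  rw [hsum, Finset.mul_sum]
  refine Finset.sum_congr rfl fun z _ ↦ ?_
  rw [measureReal_ball_smul_mul μ hε]
  ring

variable {μ}

theorem eventually_lt_riemannSum_of_forall_exists_dist_lt (hr : 0 < r)
    (hdense : ∀ x, ∃ z ∈ Γ, dist x z < r) (hΓ : ∀ K, IsCompact K → (Γ ∩ K).Finite)
    (hf : Continuous f) (hfc : HasCompactSupport f) (hf₀ : 0 ≤ f)
    (hc : c < (μ.real (ball 0 r))⁻¹ * ∫ x, f x ∂μ) :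
    ∀ᶠ ε in 𝓝[>] 0, c < riemannSum Γ f ε := by
  have hV : 0 < μ.real (ball 0 r) := measureReal_ball_pos μ 0 hr
  rw [lt_inv_mul_iff₀ hV, ← sub_pos] at hc
  obtain ⟨η, hη, hηc⟩ := exists_pos_mul_lt hc (μ.real (tsupport f))
  have hf_unif : UniformContinuous f := hfc.uniformContinuous_of_continuous hf
  filter_upwards [eventually_abs_sub_lt_of_uniformContinuous hf_unif r hη,
    eventually_nhdsGT_zero_mul_lt r one_pos, self_mem_nhdsWithin] with ε hosc hε₁ hε
  obtain ⟨T, hT⟩ := exists_finset_mem_iff_smul_mem hΓ hε.ne' (hfc.isCompact.cthickening (r := 1))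
  have hcover : ∀ x ∈ tsupport f, ∃ z ∈ T, x ∈ ball (ε • z) (ε * r) ∧ f x ≤ f (ε • z) + η := by
    intro x hx
    obtain ⟨z, hzΓ, hxz⟩ := hdense (ε⁻¹ • x)
    have hx_ball : x ∈ ball (ε • z) (ε * r) := (mem_ball_smul_mul_iff hε).2 hxz
    have hz : ε • z ∈ cthickening 1 (tsupport f) :=
      mem_cthickening_of_dist_le _ x 1 _ hx ((mem_ball'.1 hx_ball).trans hε₁).le
    exact ⟨z, (hT z).2 ⟨hzΓ, hz⟩, hx_ball, by linarith [(abs_lt.1 (hosc _ x hx_ball)).2]⟩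
  have hle := integral_le_sum_measureReal_mul_add (μ := μ) (hf.integrable_of_hasCompactSupport hfc)
    (isClosed_tsupport f).measurableSet hfc.isCompact.measure_ne_top (subset_tsupport f)
    (fun _ _ ↦ measurableSet_ball) (fun _ _ ↦ measure_ball_lt_top.ne)
    (fun z _ ↦ hf₀ (ε • z)) hcover
  rw [← measureReal_ball_mul_riemannSum μ hε
    ((subset_tsupport f).trans (self_subset_cthickening _)) hT] at hle
  exact lt_of_mul_lt_mul_left (by linarith) hV.le

theorem eventually_riemannSum_lt_of_subsingleton_inter_ball (hr : 0 < r)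
    (hdisc : ∀ x, (Γ ∩ ball x r).Subsingleton)
    (hf : Continuous f) (hfc : HasCompactSupport f) (hf₀ : 0 ≤ f)
    (hc : (μ.real (ball 0 r))⁻¹ * ∫ x, f x ∂μ < c) :
    ∀ᶠ ε in 𝓝[>] 0, riemannSum Γ f ε < c := by
  have hV : 0 < μ.real (ball 0 r) := measureReal_ball_pos μ 0 hr
  have hK : IsCompact (cthickening 1 (tsupport f)) := hfc.isCompact.cthickening
  rw [inv_mul_lt_iff₀ hV, ← sub_pos] at hc
  obtain ⟨η, hη, hηc⟩ := exists_pos_mul_lt hc (μ.real (cthickening 1 (tsupport f)))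
  have hf_unif : UniformContinuous f := hfc.uniformContinuous_of_continuous hf
  filter_upwards [eventually_abs_sub_lt_of_uniformContinuous hf_unif r hη,
    eventually_nhdsGT_zero_mul_lt r one_pos, self_mem_nhdsWithin] with ε hosc hε₁ hε
  obtain ⟨T, hT⟩ := exists_finset_mem_iff_smul_mem
    (fun _ ↦ finite_inter_isCompact_of_subsingleton_inter_ball hr hdisc) hε.ne' hfc.isCompact
  have hsub : ∀ z ∈ T, ball (ε • z) (ε * r) ⊆ cthickening 1 (tsupport f) := fun z hz x hx ↦
    mem_cthickening_of_dist_le x _ 1 _ ((hT z).1 hz).2 ((mem_ball.1 hx).trans hε₁).le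
  have hdisj : (T : Set E).PairwiseDisjoint fun z ↦ ball (ε • z) (ε * r) := by
    refine fun z hz w hw hzw ↦ disjoint_left.2 fun x hxz hxw ↦ hzw (hdisc (ε⁻¹ • x) ?_ ?_)
    · exact ⟨((hT z).1 hz).1, mem_ball_comm.1 ((mem_ball_smul_mul_iff hε).1 hxz)⟩
    · exact ⟨((hT w).1 hw).1, mem_ball_comm.1 ((mem_ball_smul_mul_iff hε).1 hxw)⟩
  have hosc_lower : ∀ z ∈ T, ∀ x ∈ ball (ε • z) (ε * r), f (ε • z) ≤ f x + η := fun z _ x hx ↦ by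
    linarith [(abs_lt.1 (hosc _ x hx)).1]
  have hle := sum_measureReal_mul_le_integral_add (μ := μ)
    (hf.integrable_of_hasCompactSupport hfc) hf₀ hK.measure_ne_top hη.le
    (fun _ _ ↦ measurableSet_ball) hsub hdisj hosc_lower
  rw [← measureReal_ball_mul_riemannSum μ hε (subset_tsupport f) hT] at hle
  exact lt_of_mul_lt_mul_left (by linarith) hV.le

variable (μ) in
theorem delone_riemann_sum_bounds_general
    (hrel : ∃ R > (0 : ℝ), ∀ x, ∃ z ∈ Γ, dist x z ≤ R)
    (hdisc : ∃ r > (0 : ℝ), ∀ x, (Γ ∩ ball x r).Subsingleton) :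
    ∃ c₁ > (0 : ℝ), ∃ c₂ > (0 : ℝ), ∀ f : E → ℝ, Continuous f → HasCompactSupport f →
      (∀ x, 0 ≤ f x) →
      c₁ * ∫ x, f x ∂μ ≤ liminf (riemannSum Γ f) (𝓝[>] 0) ∧
      liminf (riemannSum Γ f) (𝓝[>] 0) ≤ limsup (riemannSum Γ f) (𝓝[>] 0) ∧
      limsup (riemannSum Γ f) (𝓝[>] 0) ≤ c₂ * ∫ x, f x ∂μ := by
  obtain ⟨R, hR, hrel⟩ := hrel
  obtain ⟨r, hr, hdisc⟩ := hdisc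
  have hR' : 0 < R + 1 := by positivity
  have hdense : ∀ x, ∃ z ∈ Γ, dist x z < R + 1 := fun x ↦
    (hrel x).imp fun _ hz ↦ ⟨hz.1, hz.2.trans_lt (lt_add_one R)⟩
  refine ⟨_, inv_pos.2 (measureReal_ball_pos μ 0 hR'), _,
    inv_pos.2 (measureReal_ball_pos μ 0 hr), fun f hf hfc hf₀ ↦ ?_⟩
  have hlower := fun c ↦ eventually_lt_riemannSum_of_forall_exists_dist_lt (μ := μ) (c := c) hR'
    hdense (fun _ ↦ finite_inter_isCompact_of_subsingleton_inter_ball hr hdisc) hf hfc hf₀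
  have hupper := fun c ↦ eventually_riemannSum_lt_of_subsingleton_inter_ball (μ := μ) (c := c) hr
    hdisc hf hfc hf₀
  have hbelow : IsBoundedUnder (· ≥ ·) (𝓝[>] 0) (riemannSum Γ f) :=
    isBoundedUnder_of_eventually_ge ((hlower _ (sub_one_lt _)).mono fun _ ↦ le_of_lt)
  have habove : IsBoundedUnder (· ≤ ·) (𝓝[>] 0) (riemannSum Γ f) :=
    isBoundedUnder_of_eventually_le ((hupper _ (lt_add_one _)).mono fun _ ↦ le_of_lt)
  exact ⟨(le_liminf_iff habove.isCoboundedUnder_ge hbelow).2 hlower,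
    liminf_le_limsup habove hbelow,
    (limsup_le_iff hbelow.isCoboundedUnder_le habove).2 hupper⟩

end RiemannSum

/-- **Delone sets and Riemann sums.**  If `Γ ⊆ ℝ^d` is a Delone set (relatively dense and
uniformly discrete), then there exist positive constants `c₁, c₂` such that for every
nonnegative continuous compactly supported `f : ℝ^d → ℝ`,
`c₁ ∫ f ≤ liminf_{ε→0⁺} Σ_{z∈Γ} ε^d f(εz) ≤ limsup_{ε→0⁺} Σ_{z∈Γ} ε^d f(εz) ≤ c₂ ∫ f`. -/
theorem delone_riemann_sum_bounds (d : ℕ) (Γ : Set (EuclideanSpace ℝ (Fin d)))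
    (hrel : ∃ R > (0:ℝ), ∀ x : EuclideanSpace ℝ (Fin d), ∃ z ∈ Γ, dist x z ≤ R)
    (hdisc : ∃ r > (0:ℝ), ∀ x : EuclideanSpace ℝ (Fin d),
      (Γ ∩ Metric.ball x r).Subsingleton) :
    ∃ c₁ > (0:ℝ), ∃ c₂ > (0:ℝ),
      ∀ f : EuclideanSpace ℝ (Fin d) → ℝ, Continuous f → HasCompactSupport f →
        (∀ x, 0 ≤ f x) →
        c₁ * ∫ x, f x ≤
            liminf (fun ε : ℝ => ∑ᶠ z ∈ Γ, ε ^ d * f (ε • z)) (nhdsWithin 0 (Set.Ioi 0)) ∧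
        liminf (fun ε : ℝ => ∑ᶠ z ∈ Γ, ε ^ d * f (ε • z)) (nhdsWithin 0 (Set.Ioi 0)) ≤
            limsup (fun ε : ℝ => ∑ᶠ z ∈ Γ, ε ^ d * f (ε • z)) (nhdsWithin 0 (Set.Ioi 0)) ∧
        limsup (fun ε : ℝ => ∑ᶠ z ∈ Γ, ε ^ d * f (ε • z)) (nhdsWithin 0 (Set.Ioi 0)) ≤
            c₂ * ∫ x, f x := by
  simpa +unfoldPartialApp only [riemannSum, finrank_euclideanSpace_fin] using
    delone_riemann_sum_bounds_general volume hrel hdisc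
end

section
/- The probability that two randomly chosen positive integers are coprime is 6/π²; precisely, lim_{N→∞} (1/N²)·|{(a,b) ∈ ℕ×ℕ : gcd(a,b) = 1, 1 ≤ a ≤ N, 1 ≤ b ≤ N}| = 6/π². -/
open Filter

/-!
Writing `f = g * ζ`, the value `f (gcd x)` is the sum of `g d` over the common divisors `d` of the
entries of `x`. Among the `k`-tuples with entries in `{1, …, N}` exactly `⌊N / d⌋ ^ k` are divisible
by `d`, so the mean of `f (gcd x)` over these tuples is `∑ g d * (⌊N / d⌋ / N) ^ k`. Since
`⌊N / d⌋ / N` is at most `1 / d` and tends to `1 / d`, dominated convergence gives the limit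
`∑ g d / d ^ k`. For `g = μ` the function `f` is the indicator of `1`, and the limit is `1 / ζ(k)`.
-/

section

open Finset ArithmeticFunction
open scoped ArithmeticFunction.zeta ArithmeticFunction.Moebius

lemma divisors_eq_filter_Ioc {n N : ℕ} (hn : 0 < n) (hnN : n ≤ N) :
    n.divisors = {d ∈ Ioc 0 N | d ∣ n} := by
  ext d
  simp only [Nat.mem_divisors, mem_filter, mem_Ioc]
  exact ⟨fun ⟨hdn, _⟩ ↦ ⟨⟨Nat.pos_of_dvd_of_pos hdn hn, (Nat.le_of_dvd hn hdn).trans hnN⟩, hdn⟩,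
    fun ⟨_, hdn⟩ ↦ ⟨hdn, hn.ne'⟩⟩

section Tuples

variable {ι : Type*} [Fintype ι] [DecidableEq ι]

lemma card_filter_dvd_gcd_piFinset (N d : ℕ) :
    #{x ∈ Fintype.piFinset fun _ : ι ↦ Ioc 0 N | d ∣ univ.gcd x} = (N / d) ^ Fintype.card ι := by
  have h_filter : {x ∈ Fintype.piFinset fun _ : ι ↦ Ioc 0 N | d ∣ univ.gcd x} =
      Fintype.piFinset fun _ : ι ↦ {n ∈ Ioc 0 N | d ∣ n} := by
    ext x
    simp only [mem_filter, Fintype.mem_piFinset, Finset.dvd_gcd_iff, mem_univ, true_imp_iff,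
      forall_and]
  rw [h_filter, Fintype.card_piFinset, prod_const, card_univ, Nat.Ioc_filter_dvd_card_eq_div]

lemma gcd_mem_Ioc_of_mem_piFinset [Nonempty ι] {N : ℕ} {x : ι → ℕ}
    (hx : x ∈ Fintype.piFinset fun _ ↦ Ioc 0 N) : univ.gcd x ∈ Ioc 0 N := by
  let i := Classical.arbitrary ι
  have hxi : 0 < x i ∧ x i ≤ N := mem_Ioc.1 (Fintype.mem_piFinset.1 hx i)
  have h_dvd : univ.gcd x ∣ x i := gcd_dvd (mem_univ i)
  exact mem_Ioc.2 ⟨Nat.pos_of_dvd_of_pos h_dvd hxi.1, (Nat.le_of_dvd hxi.1 h_dvd).trans hxi.2⟩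

lemma sum_mul_zeta_gcd_piFinset {R : Type*} [Semiring R] [Nonempty ι] (g : ArithmeticFunction R)
    (N : ℕ) :
    ∑ x ∈ Fintype.piFinset fun _ : ι ↦ Ioc 0 N, (g * ζ) (univ.gcd x) =
      ∑ d ∈ Ioc 0 N, g d * ((N / d : ℕ) : R) ^ Fintype.card ι := by
  calc
    _ = ∑ x ∈ Fintype.piFinset fun _ : ι ↦ Ioc 0 N, ∑ d ∈ Ioc 0 N,
          if d ∣ univ.gcd x then g d else 0 := by
      refine sum_congr rfl fun x hx ↦ ?_
      obtain ⟨h_pos, h_le⟩ := mem_Ioc.1 (gcd_mem_Ioc_of_mem_piFinset hx)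
      rw [coe_mul_zeta_apply, divisors_eq_filter_Ioc h_pos h_le, sum_filter]
    _ = ∑ d ∈ Ioc 0 N, #{x ∈ Fintype.piFinset fun _ : ι ↦ Ioc 0 N | d ∣ univ.gcd x} • g d := by
      rw [sum_comm]
      simp only [← sum_filter, sum_const]
    _ = _ := by
      simp only [card_filter_dvd_gcd_piFinset, nsmul_eq_mul', Nat.cast_pow]

end Tuples

lemma tendsto_natCast_div_div_atTop (𝕜 : Type*) [RCLike 𝕜] (d : ℕ) :
    Tendsto (fun N : ℕ ↦ ((N / d : ℕ) : 𝕜) / N) atTop (nhds (1 / d)) := by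
  have h_real : Tendsto (fun N : ℕ ↦ ((N / d : ℕ) : ℝ) / N) atTop (nhds (1 / d)) := by
    have h_floor := (tendsto_nat_floor_mul_div_atTop (R := ℝ) (a := 1 / d) (by positivity)).comp
      tendsto_natCast_atTop_atTop
    refine h_floor.congr fun N ↦ ?_
    rw [Function.comp_apply, one_div_mul_eq_div, Nat.floor_div_eq_div]
  simpa [Function.comp_def] using ((RCLike.continuous_ofReal (K := 𝕜)).tendsto _).comp h_real

lemma norm_natCast_div_div_le (𝕜 : Type*) [RCLike 𝕜] (N d : ℕ) :
    ‖((N / d : ℕ) : 𝕜) / N‖ ≤ 1 / d := by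
  rw [norm_div, RCLike.norm_natCast, RCLike.norm_natCast]
  refine div_le_of_le_mul₀ N.cast_nonneg (by positivity) ?_
  rw [one_div_mul_eq_div]
  exact Nat.cast_div_le

lemma tendsto_tsum_mul_natCast_div_div_pow {𝕜 : Type*} [RCLike 𝕜] {g : ℕ → 𝕜} {k : ℕ}
    (hg : Summable fun d : ℕ ↦ ‖g d‖ / (d : ℝ) ^ k) :
    Tendsto (fun N : ℕ ↦ ∑' d : ℕ, g d * (((N / d : ℕ) : 𝕜) / N) ^ k) atTop
      (nhds (∑' d : ℕ, g d / (d : 𝕜) ^ k)) := by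
  refine tendsto_tsum_of_dominated_convergence hg (fun d ↦ ?_) (.of_forall fun N d ↦ ?_)
  · simpa [div_eq_mul_inv] using ((tendsto_natCast_div_div_atTop 𝕜 d).pow k).const_mul (g d)
  · calc
      ‖g d * (((N / d : ℕ) : 𝕜) / N) ^ k‖ = ‖g d‖ * ‖((N / d : ℕ) : 𝕜) / N‖ ^ k := by
        rw [norm_mul, norm_pow]
      _ ≤ ‖g d‖ * (1 / d) ^ k := by
        gcongr
        exact norm_natCast_div_div_le 𝕜 N d
      _ = ‖g d‖ / (d : ℝ) ^ k := by
        rw [one_div_pow, mul_one_div]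

theorem tendsto_mean_mul_zeta_gcd {ι 𝕜 : Type*} [Fintype ι] [DecidableEq ι] [Nonempty ι]
    [RCLike 𝕜] {g : ArithmeticFunction 𝕜}
    (hg : Summable fun d : ℕ ↦ ‖g d‖ / (d : ℝ) ^ Fintype.card ι) :
    Tendsto
      (fun N : ℕ ↦ 1 / (N : 𝕜) ^ Fintype.card ι *
        ∑ x ∈ Fintype.piFinset fun _ : ι ↦ Ioc 0 N, (g * ζ) (univ.gcd x))
      atTop (nhds (∑' d : ℕ, g d / (d : 𝕜) ^ Fintype.card ι)) := by
  refine (tendsto_tsum_mul_natCast_div_div_pow hg).congr fun N ↦ ?_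
  have h_zero (d : ℕ) (hd : d ∉ Ioc 0 N) :
      g d * (((N / d : ℕ) : 𝕜) / N) ^ Fintype.card ι = 0 := by
    obtain rfl | hNd : d = 0 ∨ N < d := by
      simp only [mem_Ioc] at hd
      lia
    · simp
    · simp [Nat.div_eq_of_lt hNd]
  rw [tsum_eq_sum h_zero, sum_mul_zeta_gcd_piFinset, mul_sum]
  refine sum_congr rfl fun d _ ↦ ?_
  rw [div_pow]
  ring

lemma tsum_moebius_div_pow {k : ℕ} (hk : 1 < k) :
    ∑' d : ℕ, (μ d : ℝ) / (d : ℝ) ^ k = (∑' n : ℕ, 1 / (n : ℝ) ^ k)⁻¹ := by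
  have hk_re : 1 < (k : ℂ).re := by simpa using hk
  have h_moebius : LSeries (fun n ↦ (μ n : ℂ)) k = ∑' d : ℕ, (μ d : ℂ) / (d : ℂ) ^ k := by
    refine tsum_congr fun d ↦ ?_
    rw [LSeries.term_def₀ (by simp), Complex.cpow_neg, Complex.cpow_natCast, div_eq_mul_inv]
  have h_mul := LSeries_zeta_mul_Lseries_moebius hk_re
  rw [LSeries_zeta_eq_riemannZeta hk_re, zeta_nat_eq_tsum_of_gt_one hk, h_moebius] at h_mul
  refine eq_inv_of_mul_eq_one_right (Complex.ofReal_injective ?_)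
  push_cast
  exact h_mul

lemma summable_norm_moebius_div_pow {k : ℕ} (hk : 1 < k) :
    Summable fun d : ℕ ↦ ‖(μ d : ℝ)‖ / (d : ℝ) ^ k := by
  refine (Real.summable_one_div_nat_pow.2 hk).of_nonneg_of_le (fun d ↦ by positivity) fun d ↦ ?_
  gcongr
  rw [Real.norm_eq_abs]
  exact_mod_cast abs_moebius_le_one

lemma natCast_ncard_coprime_tuples {ι : Type*} (R : Type*) [Fintype ι] [DecidableEq ι] [Ring R]
    (N : ℕ) :
    ({x : ι → ℕ | univ.gcd x = 1 ∧ ∀ i, 1 ≤ x i ∧ x i ≤ N}.ncard : R) =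
      ∑ x ∈ Fintype.piFinset fun _ : ι ↦ Ioc 0 N,
        ((μ : ArithmeticFunction R) * ζ) (univ.gcd x) := by
  have h_coe : {x : ι → ℕ | univ.gcd x = 1 ∧ ∀ i, 1 ≤ x i ∧ x i ≤ N} =
      ↑{x ∈ Fintype.piFinset fun _ : ι ↦ Ioc 0 N | univ.gcd x = 1} := by
    ext x
    simp [and_comm, Nat.one_le_iff_ne_zero, Nat.pos_iff_ne_zero]
  rw [h_coe, Set.ncard_coe_finset, coe_moebius_mul_coe_zeta]
  simp only [one_apply, sum_boole]

lemma ncard_coprime_pairs (N : ℕ) :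
    {p : ℕ × ℕ | Nat.gcd p.1 p.2 = 1 ∧ 1 ≤ p.1 ∧ p.1 ≤ N ∧ 1 ≤ p.2 ∧ p.2 ≤ N}.ncard =
      {x : Fin 2 → ℕ | univ.gcd x = 1 ∧ ∀ i, 1 ≤ x i ∧ x i ≤ N}.ncard := by
  rw [← Set.ncard_image_of_injective _ (finTwoArrowEquiv ℕ).injective,
    Equiv.image_eq_preimage_symm]
  congr 1
  ext p
  simp [Fin.univ_succ, gcd_eq_nat_gcd, and_assoc]

end

theorem coprime_pairs_density_general {ι : Type*} [Fintype ι] (hι : 1 < Fintype.card ι) :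
    Tendsto
      (fun N : ℕ ↦
        (1 : ℝ) / N ^ Fintype.card ι *
          ({x : ι → ℕ | Finset.univ.gcd x = 1 ∧ ∀ i, 1 ≤ x i ∧ x i ≤ N}.ncard : ℝ))
      atTop (nhds (∑' n : ℕ, 1 / (n : ℝ) ^ Fintype.card ι)⁻¹) := by
  classical
  have : Nonempty ι := Fintype.card_pos_iff.1 (zero_lt_one.trans hι)
  simp only [natCast_ncard_coprime_tuples, ← tsum_moebius_div_pow hι]
  exact tendsto_mean_mul_zeta_gcd (g := (ArithmeticFunction.moebius : ArithmeticFunction ℝ))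
    (summable_norm_moebius_div_pow hι)

/-- **Chebyshev's problem / Gauss's diary entry.**  The probability that two randomly chosen
positive integers are coprime is `6/π²`:
`lim_{N→∞} (1/N²)·|{(a,b) : gcd(a,b)=1, 1 ≤ a,b ≤ N}| = 6/π²`. -/
theorem coprime_pairs_density :
    Tendsto
      (fun N : ℕ =>
        (1 : ℝ) / N ^ 2 *
          ({p : ℕ × ℕ | Nat.gcd p.1 p.2 = 1 ∧ 1 ≤ p.1 ∧ p.1 ≤ N ∧ 1 ≤ p.2 ∧ p.2 ≤ N}.ncard : ℝ))
      atTop (nhds (6 / Real.pi ^ 2)) := by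
  have h_zeta_two : (∑' n : ℕ, 1 / (n : ℝ) ^ 2)⁻¹ = 6 / Real.pi ^ 2 := by
    rw [hasSum_zeta_two.tsum_eq, inv_div]
  simpa only [ncard_coprime_pairs, Fintype.card_fin, h_zeta_two] using
    coprime_pairs_density_general (ι := Fin 2) (by simp)
end

section
/- Let ℤ²,*_prim = {(m,n) ∈ ℤ² : gcd(m,n) = 1 and m − n is odd}. For every continuous function f : ℝ² → ℝ with compact support, lim_{ε→0⁺} Σ_{z∈ℤ²,*_prim} ε² f(εz) = (4/π²) · ∫_{ℝ²} f(x) dx; that is, ℤ²,*_prim has constant density 4/π². -/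
open Filter MeasureTheory

/-- `ℤ²,*_prim`: pairs of coprime integers `(m,n)` with `m - n` odd. -/
def ZPrimStar : Set (ℤ × ℤ) :=
  {p | Int.gcd p.1 p.2 = 1 ∧ Odd (p.1 - p.2)}

/-!
Möbius inversion writes a sum over the primitive points of a set `S` as `∑ μ(d)` times the sum
over the multiples of `d` in `S`. If `d • w ∈ S` means that `d` is coprime to `N` and `w ∈ S`, the
Riemann sum of the primitive points at scale `ε` becomes `∑ μ(d)/d²`, over `d` coprime to `N`,
times the Riemann sum of `S` at scale `dε`. Each of the latter tends to `c ∫ f`, where `c` is the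
density of `S`. Since `0 ∉ S`, they are moreover bounded uniformly in the scale, so dominated
convergence gives the density `c ∑ μ(d)/d²`, an Euler product for `ζ(2)⁻¹` without the primes
dividing `N`.

The points with odd coordinate difference satisfy this with `N = 2`. They are the complement of a
lattice of index `2`, so they have density `1/2`, and `1/2 · (6/π²)/(1 - 1/4) = 4/π²`.
-/

open Function Metric Set Topology
open scoped ArithmeticFunction.Moebius

/-- The lattice point `z` rescaled to the point `εz` of the plane. -/
def scaledPoint (ε : ℝ) (z : ℤ × ℤ) : ℝ × ℝ := (ε * z.1, ε * z.2)

/-- The Riemann sum `∑ ε² f(εz)` over the points `z ∈ S`. -/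
noncomputable def scaledSum (S : Set (ℤ × ℤ)) (f : ℝ × ℝ → ℝ) (ε : ℝ) : ℝ :=
  ∑ᶠ z ∈ S, ε ^ 2 * f (scaledPoint ε z)

/-- A set `S` of lattice points has constant density `c` if the measures `ε² ∑_{z ∈ S} δ_{εz}`
converge vaguely to `c` times Lebesgue measure as `ε → 0⁺`. -/
def HasConstantDensity (S : Set (ℤ × ℤ)) (c : ℝ) : Prop :=
  ∀ f : ℝ × ℝ → ℝ, Continuous f → HasCompactSupport f →
    Tendsto (scaledSum S f) (𝓝[>] 0) (𝓝 (c * ∫ x, f x))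

section ScaledSum

variable {S : Set (ℤ × ℤ)} {f : ℝ × ℝ → ℝ} {R M ε : ℝ}

theorem norm_scaledPoint (ε : ℝ) (z : ℤ × ℤ) : ‖scaledPoint ε z‖ = |ε| * ‖z‖ := by
  simp only [scaledPoint, Prod.norm_def, norm_mul, Real.norm_eq_abs, Int.norm_eq_abs,
    mul_max_of_nonneg _ _ (abs_nonneg ε)]

theorem scaledPoint_nsmul (ε : ℝ) (d : ℕ) (z : ℤ × ℤ) :
    scaledPoint ε (d • z) = scaledPoint (d * ε) z := by
  ext <;> simp [scaledPoint, mul_assoc, mul_left_comm]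

theorem support_comp_scaledPoint_subset (hf : support f ⊆ closedBall 0 R) (hε : 0 < ε) :
    support (fun z ↦ f (scaledPoint ε z)) ⊆ closedBall 0 (R / ε) := by
  intro z hz
  have hR : ‖scaledPoint ε z‖ ≤ R := mem_closedBall_zero_iff.1 (hf hz)
  rwa [norm_scaledPoint, abs_of_pos hε, ← le_div_iff₀' hε, ← mem_closedBall_zero_iff] at hR

theorem exists_support_subset_closedBall (hf : HasCompactSupport f) :
    ∃ R, support f ⊆ closedBall 0 R :=
  (hf.isCompact.isBounded.subset (subset_tsupport f)).subset_closedBall 0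

theorem finite_closedBall_int_prod (r : ℝ) : (closedBall (0 : ℤ × ℤ) r).Finite :=
  (isCompact_closedBall _ _).finite_of_discrete

theorem finite_support_comp_scaledPoint (hf : HasCompactSupport f) (hε : 0 < ε) :
    (support fun z ↦ ε ^ 2 * f (scaledPoint ε z)).Finite := by
  obtain ⟨R, hR⟩ := exists_support_subset_closedBall hf
  exact (finite_closedBall_int_prod (R / ε)).subset <|
    (support_mul_subset_right _ _).trans (support_comp_scaledPoint_subset hR hε)

theorem ncard_closedBall_sdiff_zero_le (r : ℝ) :
    ((closedBall (0 : ℤ × ℤ) r \ {0}).ncard : ℝ) ≤ 9 * r ^ 2 := by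
  rcases lt_or_ge r 1 with hr | hr
  · have hempty : closedBall (0 : ℤ × ℤ) r \ {0} = ∅ := by
      refine sdiff_eq_empty.2 fun z hz ↦ ?_
      rw [mem_closedBall_zero_iff, Prod.norm_def, max_le_iff] at hz
      have eq_zero {n : ℤ} (hn : ‖n‖ ≤ r) : n = 0 :=
        Int.abs_lt_one_iff.1 (by exact_mod_cast (Int.norm_eq_abs n ▸ hn).trans_lt hr)
      exact Prod.ext (eq_zero hz.1) (eq_zero hz.2)
    rw [hempty, ncard_empty, Nat.cast_zero]
    positivity
  · have hball : closedBall (0 : ℤ × ℤ) r = Icc (-⌊r⌋) ⌊r⌋ ×ˢ Icc (-⌊r⌋) ⌊r⌋ := by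
      rw [← Prod.mk_zero_zero, ← closedBall_prod_same, Int.closedBall_eq_Icc]
      simp [Int.ceil_neg]
    have hfloor : (1 : ℤ) ≤ ⌊r⌋ := Int.le_floor.2 (by exact_mod_cast hr)
    have hcard : ((closedBall (0 : ℤ × ℤ) r).ncard : ℝ) = (2 * ⌊r⌋ + 1) ^ 2 := by
      have h : ((Icc (-⌊r⌋) ⌊r⌋).ncard : ℤ) = 2 * ⌊r⌋ + 1 := by
        rw [← Finset.coe_Icc, ncard_coe_finset, Int.card_Icc, Int.toNat_of_nonneg (by omega)]
        ring
      rw [hball, ncard_prod, ← sq]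
      push_cast
      congr 1
      exact_mod_cast h
    calc ((closedBall (0 : ℤ × ℤ) r \ {0}).ncard : ℝ)
        ≤ (closedBall (0 : ℤ × ℤ) r).ncard := by
          exact_mod_cast ncard_le_ncard sdiff_subset (finite_closedBall_int_prod r)
      _ = (2 * ⌊r⌋ + 1) ^ 2 := hcard
      _ ≤ (3 * r) ^ 2 := by
          have := Int.floor_le r
          have : (1 : ℝ) ≤ ⌊r⌋ := by exact_mod_cast hfloor
          gcongr
          linarith
      _ = 9 * r ^ 2 := by ring

-- Uniform even as `ε → ∞`: without the origin, no point of `S` is left once `ε > R`.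
theorem norm_scaledSum_le (hS : 0 ∉ S) (hR : support f ⊆ closedBall 0 R) (hM : ∀ x, ‖f x‖ ≤ M)
    (hε : 0 < ε) : ‖scaledSum S f ε‖ ≤ 9 * R ^ 2 * M := by
  set T := S ∩ support fun z ↦ ε ^ 2 * f (scaledPoint ε z)
  have hT : T ⊆ closedBall 0 (R / ε) \ {0} := fun z hz ↦
    ⟨support_comp_scaledPoint_subset hR hε (right_ne_zero_of_mul hz.2),
      ne_of_mem_of_not_mem hz.1 hS⟩
  have hball : (closedBall (0 : ℤ × ℤ) (R / ε) \ {0}).Finite :=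
    (finite_closedBall_int_prod _).sdiff
  have hTfin : T.Finite := hball.subset hT
  have hsum : scaledSum S f ε = ∑ z ∈ hTfin.toFinset, ε ^ 2 * f (scaledPoint ε z) :=
    finsum_mem_eq_sum _ hTfin
  have hcard : (hTfin.toFinset.card : ℝ) ≤ 9 * (R / ε) ^ 2 := by
    refine le_trans ?_ (ncard_closedBall_sdiff_zero_le (R / ε))
    rw [← ncard_eq_toFinset_card T hTfin]
    exact_mod_cast ncard_le_ncard hT hball
  have hM0 : 0 ≤ M := (norm_nonneg _).trans (hM 0)
  calc ‖scaledSum S f ε‖ ≤ hTfin.toFinset.card • (ε ^ 2 * M) := by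
        rw [hsum, ← Finset.sum_const]
        refine norm_sum_le_of_le _ fun z _ ↦ ?_
        rw [norm_mul, Real.norm_of_nonneg (sq_nonneg ε)]
        gcongr
        exact hM _
    _ ≤ 9 * (R / ε) ^ 2 * (ε ^ 2 * M) := by
        rw [nsmul_eq_mul]
        gcongr
    _ = 9 * R ^ 2 * M := by field_simp

end ScaledSum

section Floor

theorem measurePreserving_floor :
    MeasurePreserving (Int.floor : ℝ → ℤ) volume Measure.count := by
  refine ⟨Int.measurable_floor, Measure.ext_of_singleton fun n ↦ ?_⟩
  rw [Measure.map_apply Int.measurable_floor (measurableSet_singleton n),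
    Int.preimage_floor_singleton, Real.volume_Ico, Measure.count_singleton]
  simp

theorem measurePreserving_floor_prod :
    MeasurePreserving (Prod.map Int.floor Int.floor : ℝ × ℝ → ℤ × ℤ) volume Measure.count := by
  have hcount : (Measure.count : Measure ℤ).prod (Measure.count : Measure ℤ) = Measure.count :=
    Measure.ext_of_singleton fun ⟨m, n⟩ ↦ by
      rw [← singleton_prod_singleton, Measure.prod_prod]
      simp
  exact hcount ▸ measurePreserving_floor.prod measurePreserving_floor

theorem integral_comp_floor_prod {E : Type*} [NormedAddCommGroup E] [NormedSpace ℝ E]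
    [CompleteSpace E] {g : ℤ × ℤ → E} (hg : (support g).Finite) :
    ∫ x : ℝ × ℝ, g (⌊x.1⌋, ⌊x.2⌋) = ∑ᶠ z, g z := by
  have hint : Integrable g Measure.count :=
    integrable_count_iff.2 (summable_of_hasFiniteSupport (hg.subset fun z ↦ by simp))
  calc ∫ x : ℝ × ℝ, g (⌊x.1⌋, ⌊x.2⌋) = ∫ z, g z ∂Measure.count :=
        measurePreserving_floor_prod.hasLaw.integral_comp hint.aestronglyMeasurable
    _ = ∑ᶠ z, g z := by
        rw [integral_countable hint]
        simp [tsum_eq_finsum hg]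

variable {f : ℝ × ℝ → ℝ} {ε : ℝ}

/-- The corner of the square of side `ε` containing `x` in the grid `εℤ²`. -/
noncomputable def gridFloor (ε : ℝ) (x : ℝ × ℝ) : ℝ × ℝ := scaledPoint ε (⌊x.1 / ε⌋, ⌊x.2 / ε⌋)

theorem norm_gridFloor_sub_le (hε : 0 < ε) (x : ℝ × ℝ) : ‖gridFloor ε x - x‖ ≤ ε := by
  have hcoord (t : ℝ) : ‖ε * ⌊t / ε⌋ - t‖ ≤ ε := by
    have hfract : t - ε * ⌊t / ε⌋ = ε * Int.fract (t / ε) := by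
      rw [Int.fract]
      field_simp
    rw [norm_sub_rev, hfract, Real.norm_of_nonneg (by positivity)]
    exact mul_le_of_le_one_right hε.le (Int.fract_lt_one _).le
  exact max_le (hcoord x.1) (hcoord x.2)

theorem measurable_gridFloor (ε : ℝ) : Measurable (gridFloor ε) := by
  unfold gridFloor scaledPoint
  fun_prop

theorem tendsto_gridFloor (x : ℝ × ℝ) : Tendsto (gridFloor · x) (𝓝[>] 0) (𝓝 x) := by
  rw [tendsto_iff_norm_sub_tendsto_zero]
  refine squeeze_zero' (Eventually.of_forall fun _ ↦ norm_nonneg _) ?_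
    (tendsto_id.mono_left nhdsWithin_le_nhds)
  filter_upwards [self_mem_nhdsWithin] with ε hε using norm_gridFloor_sub_le hε x

theorem scaledSum_univ (hf : HasCompactSupport f) (hε : 0 < ε) :
    scaledSum univ f ε = ∫ x, f (gridFloor ε x) := by
  calc scaledSum univ f ε = ∑ᶠ z, ε ^ 2 * f (scaledPoint ε z) := by
        rw [scaledSum, finsum_mem_univ]
    _ = ε ^ 2 * ∫ x : ℝ × ℝ, f (scaledPoint ε (⌊x.1⌋, ⌊x.2⌋)) := by
        rw [← integral_comp_floor_prod (finite_support_comp_scaledPoint hf hε),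
          integral_const_mul]
    _ = ∫ x, f (gridFloor ε x) := by
        have h := Measure.integral_comp_inv_smul (volume : Measure (ℝ × ℝ))
          (fun x ↦ f (scaledPoint ε (⌊x.1⌋, ⌊x.2⌋))) ε
        simp only [Prod.smul_fst, Prod.smul_snd, smul_eq_mul, Module.finrank_prod,
          Module.finrank_self, inv_mul_eq_div, Nat.reduceAdd, abs_sq] at h
        exact h.symm

theorem norm_comp_gridFloor_le {R M : ℝ} (hR : support f ⊆ closedBall 0 R) (hM : ∀ x, ‖f x‖ ≤ M)
    (hε : 0 < ε) (hε1 : ε ≤ 1) (x : ℝ × ℝ) :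
    ‖f (gridFloor ε x)‖ ≤ (closedBall 0 (R + 1)).indicator (fun _ ↦ M) x := by
  refine le_indicator_apply (fun _ ↦ hM _) fun hx ↦ norm_le_zero_iff.2 ?_
  contrapose! hx
  have hdist := norm_gridFloor_sub_le hε x
  have hnorm : ‖gridFloor ε x‖ ≤ R := mem_closedBall_zero_iff.1 (hR hx)
  have htri := norm_le_norm_add_norm_sub (gridFloor ε x) x
  rw [mem_closedBall_zero_iff]
  linarith

end Floor

namespace HasConstantDensity

variable {S : Set (ℤ × ℤ)} {c : ℝ}

theorem univ : HasConstantDensity Set.univ 1 := by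
  intro f hf hf'
  obtain ⟨R, hR⟩ := exists_support_subset_closedBall hf'
  obtain ⟨M, hM⟩ := hf'.exists_bound_of_continuous hf
  have hbound : Integrable ((closedBall (0 : ℝ × ℝ) (R + 1)).indicator fun _ ↦ M) :=
    (integrable_indicator_iff measurableSet_closedBall).2
      (integrableOn_const measure_closedBall_lt_top.ne)
  have hlim : Tendsto (fun ε ↦ ∫ x, f (gridFloor ε x)) (𝓝[>] 0) (𝓝 (∫ x, f x)) := by
    refine tendsto_integral_filter_of_dominated_convergence _
      (Eventually.of_forall fun ε ↦
        (hf.measurable.comp (measurable_gridFloor ε)).aestronglyMeasurable) ?_ hbound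
      (ae_of_all _ fun x ↦ (hf.tendsto x).comp (tendsto_gridFloor x))
    filter_upwards [Ioc_mem_nhdsGT one_pos] with ε hε
    exact ae_of_all _ (norm_comp_gridFloor_le hR hM hε.1 hε.2)
  rw [one_mul]
  refine hlim.congr' ?_
  filter_upwards [self_mem_nhdsWithin] with ε hε using (scaledSum_univ hf' hε).symm

theorem compl (h : HasConstantDensity S c) : HasConstantDensity Sᶜ (1 - c) := by
  intro f hf hf'
  rw [sub_mul]
  refine ((univ f hf hf').sub (h f hf hf')).congr' ?_
  filter_upwards [self_mem_nhdsWithin] with ε hε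
  have hfin := finite_support_comp_scaledPoint hf' hε
  rw [sub_eq_iff_eq_add', scaledSum, scaledSum, scaledSum, ← finsum_mem_union'
    disjoint_compl_right (hfin.inter_of_right S) (hfin.inter_of_right Sᶜ), union_compl_self]

theorem image_linear (h : HasConstantDensity S c) {p q r s : ℤ} (hdet : p * s - q * r ≠ 0) :
    HasConstantDensity ((fun z ↦ (p * z.1 + q * z.2, r * z.1 + s * z.2)) '' S)
      (c / |(p * s - q * r : ℤ)|) := by
  intro f hf hf'
  set A : ℝ × ℝ →ₗ[ℝ] ℝ × ℝ :=
    Matrix.toLin (.finTwoProd ℝ) (.finTwoProd ℝ) !![(p : ℝ), q; r, s] with hA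
  have hdetA : LinearMap.det A = (p * s - q * r : ℤ) := by
    rw [hA, LinearMap.det_toLin, Matrix.det_fin_two_of]
    push_cast
    ring
  have hdetA0 : LinearMap.det A ≠ 0 := by
    rw [hdetA]
    exact_mod_cast hdet
  have hinj : InjOn (fun z : ℤ × ℤ ↦ (p * z.1 + q * z.2, r * z.1 + s * z.2)) S := by
    rintro ⟨a, b⟩ - ⟨a', b'⟩ - heq
    simp only [Prod.mk.injEq] at heq ⊢
    constructor <;> apply mul_left_cancel₀ hdet
    · linear_combination s * heq.1 - q * heq.2
    · linear_combination p * heq.2 - r * heq.1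
  have hsum (ε : ℝ) : scaledSum S (f ∘ A) ε =
      scaledSum ((fun z ↦ (p * z.1 + q * z.2, r * z.1 + s * z.2)) '' S) f ε := by
    rw [scaledSum, scaledSum, finsum_mem_image hinj]
    refine finsum_mem_congr rfl fun z _ ↦ ?_
    rw [comp_apply, hA, Matrix.toLin_finTwoProd_apply]
    simp only [scaledPoint]
    push_cast
    ring_nf
  have hint : ∫ x, f (A x) = |(LinearMap.det A)⁻¹| * ∫ x, f x := by
    rw [← integral_map A.continuous_of_finiteDimensional.aemeasurable
      hf.aestronglyMeasurable, Measure.map_linearMap_addHaar_eq_smul_addHaar _ hdetA0,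
      integral_smul_measure, ENNReal.toReal_ofReal (abs_nonneg _), smul_eq_mul]
  have hcompact : HasCompactSupport (f ∘ A) :=
    hf'.comp_homeomorph
      (A.equivOfDetNeZero hdetA0).toContinuousLinearEquiv.toHomeomorph
  have hlim := h (f ∘ A) (hf.comp A.continuous_of_finiteDimensional) hcompact
  rw [funext hsum] at hlim
  convert! hlim using 2
  rw [show ∫ x, (f ∘ A) x = _ from hint, hdetA, abs_inv, Int.cast_abs]
  ring

theorem odd_sub : HasConstantDensity {z | Odd (z.1 - z.2)} (1 / 2) := by
  have heven : HasConstantDensity {z | Even (z.1 - z.2)} (1 / 2) := by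
    convert! univ.image_linear (p := 2) (q := 1) (r := 0) (s := 1) (by norm_num) using 1
    · ext ⟨m, n⟩
      simp only [mem_ofPred_eq, image_univ, mem_range, Prod.mk.injEq, Prod.exists]
      constructor
      · rintro ⟨k, hk⟩
        exact ⟨k, n, by omega, by omega⟩
      · rintro ⟨k, l, rfl, rfl⟩
        exact ⟨k, by ring⟩
  convert! heven.compl using 1
  · ext z
    exact Int.not_even_iff_odd.symm
  · norm_num

end HasConstantDensity

section Moebius

theorem sum_divisors_moebius (n : ℕ) : ∑ d ∈ n.divisors, μ d = if n = 1 then 1 else 0 := by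
  rw [← ArithmeticFunction.coe_mul_zeta_apply, ArithmeticFunction.moebius_mul_coe_zeta,
    ArithmeticFunction.one_apply]

theorem hasSum_moebius_of_dvd {n : ℕ} (hn : n ≠ 0) :
    HasSum (fun d ↦ if d ∣ n then (μ d : ℝ) else 0) (if n = 1 then 1 else 0) := by
  have hsum : ∑ d ∈ n.divisors, (if d ∣ n then (μ d : ℝ) else 0) = if n = 1 then 1 else 0 := by
    rw [Finset.sum_congr rfl fun d hd ↦ if_pos (Nat.dvd_of_mem_divisors hd)]
    exact_mod_cast sum_divisors_moebius n
  rw [← hsum]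
  refine hasSum_sum_of_ne_finset_zero fun d hd ↦ if_neg ?_
  exact fun hdn ↦ hd (Nat.mem_divisors.2 ⟨hdn, hn⟩)

theorem setOf_dvd_gcd_eq_range_nsmul (d : ℕ) :
    {z : ℤ × ℤ | d ∣ Int.gcd z.1 z.2} = range fun w : ℤ × ℤ ↦ d • w := by
  ext ⟨m, n⟩
  rw [mem_ofPred_eq, Int.dvd_gcd_iff]
  constructor
  · rintro ⟨⟨k, hk⟩, ⟨l, hl⟩⟩
    exact ⟨(k, l), by simp_all⟩
  · rintro ⟨⟨k, l⟩, h⟩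
    simp_all [eq_comm]

theorem hasSum_moebius_mul_finsum_nsmul {g : ℤ × ℤ → ℝ} (hg : (support g).Finite)
    (hg0 : g 0 = 0) :
    HasSum (fun d : ℕ ↦ μ d * ∑ᶠ w, g (d • w))
      (∑ᶠ z ∈ {z : ℤ × ℤ | Int.gcd z.1 z.2 = 1}, g z) := by
  have hsupp (P : ℤ × ℤ → Prop) [DecidablePred P] :
      ∑ᶠ z ∈ {z | P z}, g z = ∑ z ∈ hg.toFinset, if P z then g z else 0 := by
    rw [← Finset.sum_filter]
    refine finsum_mem_eq_sum_of_inter_support_eq _ ?_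
    ext z
    simp +contextual
  have hmult (d : ℕ) : μ d * ∑ᶠ w, g (d • w) =
      ∑ z ∈ hg.toFinset, (if d ∣ Int.gcd z.1 z.2 then (μ d : ℝ) else 0) * g z := by
    rcases eq_or_ne d 0 with rfl | hd
    · simp
    · rw [← finsum_mem_range (smul_right_injective _ hd), ← setOf_dvd_gcd_eq_range_nsmul, hsupp,
        Finset.mul_sum]
      simp only [mul_ite, ite_mul, mul_zero, zero_mul]
  rw [funext hmult, hsupp]
  refine hasSum_sum fun z hz ↦ ?_
  have hgcd : Int.gcd z.1 z.2 ≠ 0 := by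
    intro h
    obtain rfl : z = 0 := Prod.ext_iff.2 (Int.gcd_eq_zero_iff.1 h)
    exact hg.mem_toFinset.1 hz hg0
  simpa only [ite_mul, one_mul, zero_mul] using (hasSum_moebius_of_dvd hgcd).mul_right (g z)

/-- The weight with which the multiples of `d` enter the sieve for primitive points: the Möbius
coefficient `μ(d)` over the covolume `d²` of `dℤ²`, for `d` coprime to `N`. -/
noncomputable def sieveWeight (N d : ℕ) : ℝ := if d.Coprime N then μ d / d ^ 2 else 0

theorem norm_sieveWeight_le (N d : ℕ) : ‖sieveWeight N d‖ ≤ 1 / d ^ 2 := by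
  rw [sieveWeight]
  split_ifs
  · rw [norm_div, norm_pow, RCLike.norm_natCast, Real.norm_eq_abs]
    gcongr
    exact_mod_cast ArithmeticFunction.abs_moebius_le_one
  · rw [norm_zero]
    positivity

theorem tsum_sieveWeight (N : ℕ) [NeZero N] :
    ∑' d, sieveWeight N d = 6 / Real.pi ^ 2 / ∏ p ∈ N.primeFactors, (1 - (p : ℝ)⁻¹ ^ 2) := by
  have h2 : 1 < (2 : ℂ).re := by norm_num
  have hinv := DirichletCharacter.LSeries.mul_mu_eq_one (1 : DirichletCharacter ℂ N) h2
  rw [← DirichletCharacter.LFunction_eq_LSeries _ h2, ← DirichletCharacter.LFunctionTrivChar,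
    DirichletCharacter.LFunctionTrivChar_eq_mul_riemannZeta (by norm_num), riemannZeta_two] at hinv
  have hweight : LSeries ((fun n : ℕ ↦ (1 : DirichletCharacter ℂ N) n) * fun n ↦ (μ n : ℂ)) 2
      = (∑' d, sieveWeight N d : ℝ) := by
    rw [Complex.ofReal_tsum]
    refine tsum_congr fun d ↦ ?_
    rw [LSeries.term_def₀ (by simp), Pi.mul_apply, sieveWeight, Complex.cpow_neg,
      Complex.cpow_ofNat]
    split_ifs with hd
    · rw [MulChar.one_apply ((ZMod.isUnit_iff_coprime d N).2 hd)]
      push_cast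
      ring
    · rw [MulChar.map_nonunit _ (mt (ZMod.isUnit_iff_coprime d N).1 hd)]
      simp
  have hprod : ∏ p ∈ N.primeFactors, (1 - (p : ℂ) ^ (-2 : ℂ)) =
      (∏ p ∈ N.primeFactors, (1 - (p : ℝ)⁻¹ ^ 2) : ℝ) := by
    push_cast
    simp [Complex.cpow_neg]
  rw [hweight, hprod] at hinv
  have hreal : (∏ p ∈ N.primeFactors, (1 - (p : ℝ)⁻¹ ^ 2)) * (Real.pi ^ 2 / 6) *
      ∑' d, sieveWeight N d = 1 := by
    exact_mod_cast hinv
  rw [eq_comm, div_div, div_eq_iff (by intro h; simp_all)]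
  linear_combination -6 * hreal

end Moebius

section Sieve

variable {S : Set (ℤ × ℤ)} {N : ℕ} {f : ℝ × ℝ → ℝ} {c : ℝ}

theorem hasSum_sieveWeight_mul_scaledSum (hS0 : 0 ∉ S)
    (hS : ∀ d : ℕ, d ≠ 0 → ∀ w : ℤ × ℤ, d • w ∈ S ↔ d.Coprime N ∧ w ∈ S)
    (hf : HasCompactSupport f) {ε : ℝ} (hε : 0 < ε) :
    HasSum (fun d : ℕ ↦ sieveWeight N d * scaledSum S f (d * ε))
      (scaledSum {z ∈ S | Int.gcd z.1 z.2 = 1} f ε) := by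
  set g : ℤ × ℤ → ℝ := S.indicator fun z ↦ ε ^ 2 * f (scaledPoint ε z) with hg_def
  have hg : (support g).Finite := (finite_support_comp_scaledPoint hf hε).subset <|
    support_indicator.trans_subset inter_subset_right
  have hmult (d : ℕ) : μ d * ∑ᶠ w, g (d • w) = sieveWeight N d * scaledSum S f (d * ε) := by
    rcases eq_or_ne d 0 with rfl | hd
    · simp [sieveWeight]
    · have hterm (w : ℤ × ℤ) : μ d * g (d • w) =
          sieveWeight N d * S.indicator (fun w ↦ (d * ε) ^ 2 * f (scaledPoint (d * ε) w)) w := by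
        by_cases hdw : d • w ∈ S
        · obtain ⟨hdN, hw⟩ := (hS d hd w).1 hdw
          rw [hg_def, indicator_of_mem hdw, indicator_of_mem hw, scaledPoint_nsmul, sieveWeight,
            if_pos hdN]
          field_simp
        · rw [hg_def, indicator_of_notMem hdw, mul_zero, eq_comm, mul_eq_zero]
          by_cases hdN : d.Coprime N
          · exact .inr (indicator_of_notMem (fun hw ↦ hdw ((hS d hd w).2 ⟨hdN, hw⟩)) _)
          · exact .inl (if_neg hdN)
      rw [scaledSum, finsum_mem_def, ← smul_eq_mul, ← smul_eq_mul, smul_finsum, smul_finsum]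
      exact finsum_congr hterm
  have hprim : scaledSum {z ∈ S | Int.gcd z.1 z.2 = 1} f ε =
      ∑ᶠ z ∈ {z : ℤ × ℤ | Int.gcd z.1 z.2 = 1}, g z := by
    rw [scaledSum, finsum_mem_def, finsum_mem_def, hg_def, indicator_indicator, inter_comm]
    rfl
  rw [hprim, ← funext hmult]
  exact hasSum_moebius_mul_finsum_nsmul hg (indicator_of_notMem hS0 _)

theorem HasConstantDensity.primitive [NeZero N] (h : HasConstantDensity S c) (hS0 : 0 ∉ S)
    (hS : ∀ d : ℕ, d ≠ 0 → ∀ w : ℤ × ℤ, d • w ∈ S ↔ d.Coprime N ∧ w ∈ S) :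
    HasConstantDensity {z ∈ S | Int.gcd z.1 z.2 = 1}
      (6 / Real.pi ^ 2 / (∏ p ∈ N.primeFactors, (1 - (p : ℝ)⁻¹ ^ 2)) * c) := by
  intro f hf hf'
  obtain ⟨R, hR⟩ := exists_support_subset_closedBall hf'
  obtain ⟨M, hM⟩ := hf'.exists_bound_of_continuous hf
  have hlim : Tendsto (fun ε ↦ ∑' d : ℕ, sieveWeight N d * scaledSum S f (d * ε)) (𝓝[>] 0)
      (𝓝 (∑' d, sieveWeight N d * (c * ∫ x, f x))) := by
    refine tendsto_tsum_of_dominated_convergence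
      (bound := fun d ↦ 1 / (d : ℝ) ^ 2 * (9 * R ^ 2 * M))
      ((Real.summable_one_div_nat_pow.2 one_lt_two).mul_right _) (fun d ↦ ?_) ?_
    · rcases eq_or_ne d 0 with rfl | hd
      · simp [sieveWeight]
      · have hscale : Tendsto (fun ε : ℝ ↦ d * ε) (𝓝[>] 0) (𝓝[>] 0) := by
          have hd0 : (0 : ℝ) < d := by positivity
          simpa using TendstoNhdsWithinIoi.const_mul hd0 (tendsto_id (x := 𝓝[>] (0 : ℝ)))
        exact ((h f hf hf').comp hscale).const_mul _
    · filter_upwards [self_mem_nhdsWithin] with ε hε d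
      rcases eq_or_ne d 0 with rfl | hd
      · simp [sieveWeight]
      · rw [norm_mul]
        gcongr
        · exact norm_sieveWeight_le N d
        · exact norm_scaledSum_le hS0 hR hM (mul_pos (by positivity) hε)
  rw [tsum_mul_right, tsum_sieveWeight, ← mul_assoc] at hlim
  refine hlim.congr' ?_
  filter_upwards [self_mem_nhdsWithin] with ε hε
  exact (hasSum_sieveWeight_mul_scaledSum hS0 hS hf' hε).tsum_eq

end Sieve

theorem odd_nsmul_fst_sub_snd_iff (d : ℕ) (w : ℤ × ℤ) :
    Odd ((d • w).1 - (d • w).2) ↔ d.Coprime 2 ∧ Odd (w.1 - w.2) := by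
  simp [← mul_sub, Int.odd_mul]

/-- **`ℤ²,*_prim` has constant density `4/π²`** : for every continuous compactly supported
`f : ℝ² → ℝ`, `lim_{ε→0⁺} Σ_{z ∈ ℤ²,*_prim} ε² f(εz) = (4/π²) ∫_{ℝ²} f(x) dx`. -/
theorem ZPrimStar_constant_density (f : ℝ × ℝ → ℝ)
    (hf : Continuous f) (hf' : HasCompactSupport f) :
    Tendsto
      (fun ε : ℝ => ∑ᶠ z ∈ ZPrimStar, ε ^ 2 * f (ε * (z.1 : ℝ), ε * (z.2 : ℝ)))
      (nhdsWithin 0 (Set.Ioi 0))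
      (nhds (4 / Real.pi ^ 2 * ∫ x : ℝ × ℝ, f x)) := by
  have hset : ZPrimStar = {z ∈ {z : ℤ × ℤ | Odd (z.1 - z.2)} | Int.gcd z.1 z.2 = 1} :=
    Set.ext fun _ ↦ and_comm
  have hconst : 6 / Real.pi ^ 2 / (∏ p ∈ Nat.primeFactors 2, (1 - (p : ℝ)⁻¹ ^ 2)) * (1 / 2) =
      4 / Real.pi ^ 2 := by
    rw [Nat.prime_two.primeFactors, Finset.prod_singleton]
    field_simp
    norm_num
  have hdensity : HasConstantDensity ZPrimStar (4 / Real.pi ^ 2) := by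
    rw [hset, ← hconst]
    exact HasConstantDensity.odd_sub.primitive (by simp) fun d _ w ↦ odd_nsmul_fst_sub_snd_iff d w
  exact hdensity f hf hf'
end

section
/- lim_{N→∞} (1/N)·|{(m,n) ∈ ℕ×ℕ : gcd(m,n) = 1, m > n ≥ 1, m² + n² ≤ N, and m − n is odd}| = 1/(2π). Equivalently, the number of primitive Pythagorean triples (x,y,z) with hypotenuse z ≤ N (not distinguishing (x,y,z) from (y,x,z)) is asymptotic to N/(2π). -/
open Filter

/-!
Identify `(m, n)` with `m + n i`. The octant `0 < n < m` meets the unit disc in area `π / 8`, so it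
contains about `π N / 8` Gaussian integers with `m² + n² ≤ N`. Möbius inversion over the gcd leaves
`R(N) ~ (6 / π²) (π N / 8)` coprime pairs among them. The map `(m, n) ↦ (m + n, m - n)` doubles
`m² + n²` and carries the coprime pairs of opposite parity onto the coprime pairs of odd numbers, so
the number `Q(N)` of the former satisfies `Q(N) + Q(N / 2) = R(N)`. Hence
`Q(N) = ∑ (-1)^k R(N / 2^k)`, which is asymptotic to `(2 / 3) R(N)`. Both passages to the limit are
dominated convergence for a sum `∑ c i * f (N / k i)` in which `f n / n` converges.
-/

open scoped Topology ArithmeticFunction.Moebius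

section FloorRescaling

variable {f : ℕ → ℝ} {L : ℝ}

lemma tendsto_comp_natDiv_div (hf₀ : f 0 = 0)
    (hf : Tendsto (fun n : ℕ => f n / n) atTop (𝓝 L)) (k : ℕ) :
    Tendsto (fun n : ℕ => f (n / k) / n) atTop (𝓝 (L / k)) := by
  rcases eq_or_ne k 0 with rfl | hk
  · simp [hf₀]
  have hfloor : Tendsto (fun n : ℕ => ((n / k : ℕ) : ℝ) / n) atTop (𝓝 (1 / k)) := by
    refine ((tendsto_nat_floor_mul_div_atTop (R := ℝ) (a := 1 / k) (by positivity)).comp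
      tendsto_natCast_atTop_atTop).congr fun n => ?_
    rw [Function.comp_apply, one_div_mul_eq_div, Nat.floor_div_eq_div]
  rw [← mul_one_div]
  refine ((hf.comp (Nat.tendsto_div_const_atTop hk)).mul hfloor).congr' ?_
  filter_upwards [eventually_ge_atTop k] with n hn
  have : ((n / k : ℕ) : ℝ) ≠ 0 := by exact_mod_cast (Nat.div_pos hn hk.bot_lt).ne'
  simp only [Function.comp_apply]
  field_simp

lemma exists_abs_le_mul_of_tendsto_div (hf₀ : f 0 = 0)
    (hf : Tendsto (fun n : ℕ => f n / n) atTop (𝓝 L)) :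
    ∃ C : ℝ, 0 ≤ C ∧ ∀ n : ℕ, |f n| ≤ C * n := by
  obtain ⟨C, hC⟩ := hf.abs.bddAbove_range
  have hC' (n : ℕ) : |f n / n| ≤ C := hC (Set.mem_range_self n)
  refine ⟨C, (abs_nonneg _).trans (hC' 0), fun n => ?_⟩
  rcases n.eq_zero_or_pos with rfl | hn
  · simp [hf₀]
  · have hn' : (0 : ℝ) < n := by exact_mod_cast hn
    simpa only [abs_div, Nat.abs_cast, div_le_iff₀ hn'] using hC' n

theorem tendsto_div_of_hasSum_comp_natDiv {ι : Type*} {c : ι → ℝ} {k : ι → ℕ} {g : ℕ → ℝ} {M : ℝ}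
    (hc : HasSum (fun i => c i / k i) M) (hf₀ : f 0 = 0)
    (hf : Tendsto (fun n : ℕ => f n / n) atTop (𝓝 L))
    (hg : ∀ n, HasSum (fun i => c i * f (n / k i)) (g n)) :
    Tendsto (fun n : ℕ => g n / n) atTop (𝓝 (M * L)) := by
  obtain ⟨C, hC₀, hC⟩ := exists_abs_le_mul_of_tendsto_div hf₀ hf
  have hpointwise (i : ι) :
      Tendsto (fun n : ℕ => c i * f (n / k i) / n) atTop (𝓝 (c i / k i * L)) := by
    simpa only [mul_div_assoc, div_mul_eq_mul_div] using
      (tendsto_comp_natDiv_div hf₀ hf (k i)).const_mul (c i)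
  have hbound (n : ℕ) (i : ι) : ‖c i * f (n / k i) / n‖ ≤ |c i / k i| * C := by
    rw [Real.norm_eq_abs, abs_div, abs_mul, Nat.abs_cast]
    refine div_le_of_le_mul₀ n.cast_nonneg (by positivity) ?_
    calc |c i| * |f (n / k i)| ≤ |c i| * (C * (n / k i : ℕ)) := by gcongr; exact hC _
      _ ≤ |c i| * (C * (n / k i)) := by gcongr; exact Nat.cast_div_le
      _ = |c i / k i| * C * n := by rw [abs_div, Nat.abs_cast]; ring
  have hlim := tendsto_tsum_of_dominated_convergence (hc.summable.abs.mul_right C) hpointwise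
    (Eventually.of_forall hbound)
  rw [(hc.mul_right L).tsum_eq] at hlim
  exact hlim.congr fun n => ((hg n).div_const _).tsum_eq

end FloorRescaling

lemma hasSum_neg_one_pow_mul_comp_div_pow {R : Type*} [Ring R] [TopologicalSpace R]
    [IsTopologicalAddGroup R] {b : ℕ} (hb : 1 < b) {f g : ℕ → R} (hg₀ : g 0 = 0)
    (hfg : ∀ n, g n + g (n / b) = f n) (n : ℕ) :
    HasSum (fun k => (-1) ^ k * f (n / b ^ k)) (g n) := by
  induction n using Nat.strong_induction_on with
  | _ n ih =>
    rcases n.eq_zero_or_pos with rfl | hn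
    · have hf₀ : f 0 = 0 := by simpa [hg₀] using (hfg 0).symm
      simp [hg₀, hf₀, hasSum_zero]
    · have htail : HasSum (fun k => (-1) ^ (k + 1) * f (n / b ^ (k + 1))) (-g (n / b)) := by
        simpa only [pow_succ', Nat.div_div_eq_div_mul, neg_mul, one_mul] using
          (ih (n / b) (Nat.div_lt_self hn hb)).neg
      have hsum := htail.zero_add (f := fun k => (-1) ^ k * f (n / b ^ k))
      rwa [pow_zero, pow_zero, Nat.div_one, one_mul, ← hfg n, add_neg_cancel_right] at hsum

section Moebius

lemma hasSum_moebius_mul_card_filter_dvd {α R : Type*} [Ring R] [TopologicalSpace R]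
    [ContinuousAdd R] (s : Finset α) {f : α → ℕ} (hf : ∀ a ∈ s, f a ≠ 0) :
    HasSum (fun d => (μ d : R) * (s.filter fun a => d ∣ f a).card)
      ((s.filter fun a => f a = 1).card : R) := by
  have hterm (a : α) (ha : a ∈ s) :
      HasSum (fun d => if d ∣ f a then (μ d : R) else 0) (if f a = 1 then 1 else 0) := by
    have hdiv : ∑ d ∈ (f a).divisors, (if d ∣ f a then (μ d : R) else 0) =
        if f a = 1 then 1 else 0 := by
      rw [← ArithmeticFunction.one_apply, ← ArithmeticFunction.coe_moebius_mul_coe_zeta,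
        ArithmeticFunction.coe_mul_zeta_apply]
      exact Finset.sum_congr rfl fun d hd => if_pos (Nat.dvd_of_mem_divisors hd)
    rw [← hdiv]
    exact hasSum_sum_of_ne_finset_zero fun d hd =>
      if_neg fun hda => hd (Nat.mem_divisors.2 ⟨hda, hf a ha⟩)
  simpa only [Finset.card_filter, Nat.cast_sum, Nat.cast_ite, Nat.cast_one, Nat.cast_zero,
    Finset.mul_sum, mul_ite, mul_one, mul_zero] using hasSum_sum hterm

lemma hasSum_moebius_div_pow {k : ℕ} (hk : 1 < k) :
    HasSum (fun d : ℕ => (μ d : ℂ) / (d : ℂ) ^ k) (riemannZeta k)⁻¹ := by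
  have hk' : 1 < (k : ℂ).re := by simpa using hk
  have hinv : LSeries (fun d => (μ d : ℂ)) k = (riemannZeta k)⁻¹ := by
    rw [← ArithmeticFunction.LSeries_zeta_eq_riemannZeta hk']
    exact eq_inv_of_mul_eq_one_right
      (ArithmeticFunction.LSeries_zeta_mul_Lseries_moebius hk')
  rw [← hinv]
  refine (ArithmeticFunction.LSeriesSummable_moebius_iff.2 hk').LSeriesHasSum.congr_fun fun d => ?_
  rcases eq_or_ne d 0 with rfl | hd
  · simp
  · rw [LSeries.term_of_ne_zero hd, Complex.cpow_natCast]

lemma hasSum_moebius_div_sq :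
    HasSum (fun d : ℕ => (μ d : ℝ) / (d : ℝ) ^ 2) (6 / Real.pi ^ 2) := by
  have h := hasSum_moebius_div_pow one_lt_two
  rw [Nat.cast_ofNat, riemannZeta_two, inv_div] at h
  rw [← Complex.hasSum_ofReal]
  push_cast
  exact h

end Moebius

section Octant

open MeasureTheory Complex Set

lemma volume_real_sector {R : ℝ} (hR : 0 ≤ R) {S : Set ℝ} (hS : MeasurableSet S)
    (hSpi : S ⊆ Ioo (-Real.pi) Real.pi) :
    volume.real {z : ℂ | ‖z‖ ≤ R ∧ arg z ∈ S} = R ^ 2 / 2 * volume.real S := by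
  set s := {z : ℂ | ‖z‖ ≤ R ∧ arg z ∈ S}
  have hs : MeasurableSet s :=
    (measurableSet_le measurable_norm measurable_const).inter (measurable_arg hS)
  have hpolar : ∀ p ∈ polarCoord.target,
      p.1 • s.indicator (1 : ℂ → ℝ) (Complex.polarCoord.symm p) =
        (Ioc 0 R ×ˢ S).indicator (fun q => q.1 * 1) p := by
    rintro ⟨r, θ⟩ ⟨hr, hθ⟩
    rw [mem_Ioi] at hr
    have hmem : Complex.polarCoord.symm (r, θ) ∈ s ↔ (r, θ) ∈ Ioc 0 R ×ˢ S := by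
      have harg : arg (Complex.polarCoord.symm (r, θ)) = θ := by
        rw [Complex.polarCoord_symm_apply, ofReal_cos, ofReal_sin]
        exact arg_mul_cos_add_sin_mul_I hr (Ioo_subset_Ioc_self hθ)
      simp only [s, mem_ofPred_eq, norm_polarCoord_symm, abs_of_pos hr, harg, mem_prod, mem_Ioc,
        hr, true_and]
    by_cases h : (r, θ) ∈ Ioc 0 R ×ˢ S
    · rw [indicator_of_mem h, indicator_of_mem (hmem.2 h), Pi.one_apply, smul_eq_mul]
    · rw [indicator_of_notMem h, indicator_of_notMem (mt hmem.1 h), smul_zero]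
  have hsub : Ioc 0 R ×ˢ S ⊆ polarCoord.target := prod_mono Ioc_subset_Ioi_self hSpi
  rw [← integral_indicator_one hs, ← Complex.integral_comp_polarCoord_symm,
    setIntegral_congr_fun polarCoord.open_target.measurableSet hpolar,
    setIntegral_indicator (measurableSet_Ioc.prod hS), inter_eq_right.2 hsub,
    Measure.volume_eq_prod, setIntegral_prod_mul (fun r : ℝ => r) (fun _ : ℝ => (1 : ℝ)),
    ← intervalIntegral.integral_of_le hR, integral_id, setIntegral_const, smul_eq_mul, mul_one]
  ring

lemma sin_pos_and_sin_lt_cos_iff {θ : ℝ} (hθ : θ ∈ Ioc (-Real.pi) Real.pi) :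
    0 < Real.sin θ ∧ Real.sin θ < Real.cos θ ↔ θ ∈ Ioo 0 (Real.pi / 4) := by
  have hdiff : Real.cos θ - Real.sin θ = √2 * Real.cos (θ + Real.pi / 4) := by
    rw [Real.cos_add, Real.cos_pi_div_four, Real.sin_pi_div_four]
    linear_combination (-1 / 2) * (Real.cos θ - Real.sin θ) * Real.sq_sqrt zero_le_two
  have hlt : Real.sin θ < Real.cos θ ↔ 0 < Real.cos (θ + Real.pi / 4) := by
    rw [← sub_pos, hdiff, mul_pos_iff_of_pos_left (by positivity)]
  have hpi := Real.pi_pos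
  rw [hlt]
  constructor
  · rintro ⟨hsin, hcos⟩
    have hpos : 0 < θ := by
      contrapose! hsin
      exact Real.sin_nonpos_of_nonpos_of_neg_pi_le hsin hθ.1.le
    refine ⟨hpos, ?_⟩
    contrapose! hcos
    exact Real.cos_nonpos_of_pi_div_two_le_of_le (by linarith) (by linarith [hθ.2])
  · rintro ⟨hpos, hθ'⟩
    exact ⟨Real.sin_pos_of_pos_of_lt_pi hpos (by linarith),
      Real.cos_pos_of_mem_Ioo ⟨by linarith, by linarith⟩⟩

/-- The open octant of the complex plane between the positive real axis and the diagonal. -/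
def openOctant : Set ℂ := {z | 0 < z.im ∧ z.im < z.re}

lemma mem_openOctant_iff_arg {z : ℂ} : z ∈ openOctant ↔ arg z ∈ Ioo 0 (Real.pi / 4) := by
  rcases eq_or_ne z 0 with rfl | hz
  · simp [openOctant]
  have hz' : 0 < ‖z‖ := norm_pos_iff.2 hz
  rw [← sin_pos_and_sin_lt_cos_iff (arg_mem_Ioc z), openOctant, mem_ofPred_eq,
    ← norm_mul_sin_arg z, ← norm_mul_cos_arg z, mul_pos_iff_of_pos_left hz',
    mul_lt_mul_iff_right₀ hz']

lemma smul_mem_openOctant {z : ℂ} {r : ℝ} (hz : z ∈ openOctant) (hr : 0 < r) :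
    r • z ∈ openOctant := by
  simpa only [openOctant, mem_ofPred_eq, smul_im, smul_re, smul_eq_mul, hr,
    mul_pos_iff_of_pos_left, mul_lt_mul_iff_right₀] using hz

lemma isOpen_openOctant : IsOpen openOctant :=
  (isOpen_lt continuous_const continuous_im).inter (isOpen_lt continuous_im continuous_re)

lemma convex_openOctant : Convex ℝ openOctant := by
  have hdiag : Convex ℝ {z : ℂ | 0 < (reLm - imLm) z} :=
    (convex_Ioi (0 : ℝ)).linear_preimage (reLm - imLm)
  simpa [openOctant, Set.ofPred_and] using (convex_halfSpace_im_gt 0).inter hdiag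

lemma covolume_span_orthonormalBasis {ι E : Type*} [Fintype ι] [NormedAddCommGroup E]
    [InnerProductSpace ℝ E] [FiniteDimensional ℝ E] [MeasurableSpace E] [BorelSpace E]
    (b : OrthonormalBasis ι ℝ E) :
    ZLattice.covolume (Submodule.span ℤ (range b.toBasis)) = 1 := by
  rw [ZLattice.covolume_eq_measure_fundamentalDomain _ _
      (ZSpan.isAddFundamentalDomain b.toBasis volume),
    measureReal_congr (ZSpan.fundamentalDomain_ae_parallelepiped b.toBasis volume),
    b.coe_toBasis, measureReal_def, b.volume_parallelepiped, ENNReal.toReal_one]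

lemma mem_span_orthonormalBasisOneI_iff {z : ℂ} :
    z ∈ Submodule.span ℤ (range orthonormalBasisOneI.toBasis) ↔ ∃ a b : ℤ, (⟨a, b⟩ : ℂ) = z := by
  rw [OrthonormalBasis.coe_toBasis, coe_orthonormalBasisOneI, Matrix.range_cons_cons_empty,
    Submodule.mem_span_pair]
  simp [mk_eq_add_mul_I]

/-- The points `(m, n)` of the integer lattice in the open octant `0 < n < m` and in the disc
`m² + n² ≤ N`. -/
def octantPoints (N : ℕ) : Finset (ℕ × ℕ) :=
  {p ∈ Finset.range (N + 1) ×ˢ Finset.range (N + 1) |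
    0 < p.2 ∧ p.2 < p.1 ∧ p.1 ^ 2 + p.2 ^ 2 ≤ N}

lemma mem_octantPoints {N : ℕ} {p : ℕ × ℕ} :
    p ∈ octantPoints N ↔ 0 < p.2 ∧ p.2 < p.1 ∧ p.1 ^ 2 + p.2 ^ 2 ≤ N := by
  simp only [octantPoints, Finset.mem_filter, Finset.mem_product, Finset.mem_range,
    and_iff_right_iff_imp]
  rintro ⟨-, -, h⟩
  constructor <;> nlinarith

lemma octantPoints_zero : octantPoints 0 = ∅ := by
  ext p
  simp only [mem_octantPoints, Finset.notMem_empty, iff_false]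
  rintro ⟨-, hlt, h⟩
  nlinarith

lemma image_octantPoints_eq (N : ℕ) :
    (fun p : ℕ × ℕ => (⟨p.1, p.2⟩ : ℂ)) '' octantPoints N =
      {z | z ∈ openOctant ∧ ‖z‖ ^ 2 ≤ N} ∩
        Submodule.span ℤ (range orthonormalBasisOneI.toBasis) := by
  ext z
  simp only [mem_image, mem_octantPoints, mem_inter_iff, mem_ofPred_eq,
    SetLike.mem_coe, mem_span_orthonormalBasisOneI_iff, openOctant, Complex.sq_norm,
    normSq_apply, ← pow_two]
  constructor
  · rintro ⟨⟨m, n⟩, ⟨hn, hnm, hN⟩, rfl⟩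
    dsimp only at hn hnm hN ⊢
    exact ⟨⟨⟨by exact_mod_cast hn, by exact_mod_cast hnm⟩, by exact_mod_cast hN⟩,
      m, n, by simp⟩
  · rintro ⟨⟨⟨hb, hba⟩, hN⟩, a, b, rfl⟩
    dsimp only at hb hba hN
    norm_cast at hb hba hN
    lift b to ℕ using hb.le
    lift a to ℕ using by lia
    exact ⟨(a, b), ⟨by exact_mod_cast hb, by exact_mod_cast hba, by exact_mod_cast hN⟩, by simp⟩

lemma volume_real_openOctant_inter_disc :
    volume.real {z | z ∈ openOctant ∧ ‖z‖ ^ 2 ≤ 1} = Real.pi / 8 := by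
  have hpi := Real.pi_pos
  have hsector := volume_real_sector zero_le_one (measurableSet_Ioo (a := 0) (b := Real.pi / 4))
    (Ioo_subset_Ioo (by linarith) (by linarith))
  simp only [mem_openOctant_iff_arg, sq_le_one_iff₀ (norm_nonneg _), and_comm, hsector,
    Real.volume_real_Ioo_of_le (by positivity : (0 : ℝ) ≤ Real.pi / 4)]
  ring

theorem tendsto_card_octantPoints_div :
    Tendsto (fun N : ℕ => ((octantPoints N).card : ℝ) / N) atTop (𝓝 (Real.pi / 8)) := by
  have hdisc : {z | z ∈ openOctant ∧ ‖z‖ ^ 2 ≤ 1} = openOctant ∩ Metric.closedBall 0 1 := by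
    ext z
    simp
  have hlim := ZLattice.covolume.tendsto_card_le_div'
    (Submodule.span ℤ (range orthonormalBasisOneI.toBasis)) (X := openOctant)
    (F := fun z => ‖z‖ ^ 2) (fun _ _ => smul_mem_openOctant)
    (fun z r _ => by rw [finrank_real_complex, norm_smul, mul_pow, Real.norm_eq_abs, sq_abs])
    (hdisc ▸ Metric.isBounded_closedBall.subset inter_subset_right)
    (hdisc ▸ isOpen_openOctant.measurableSet.inter Metric.isClosed_closedBall.measurableSet)
    (hdisc ▸ (convex_openOctant.inter (convex_closedBall 0 1)).addHaar_frontier volume)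
  rw [covolume_span_orthonormalBasis, div_one, volume_real_openOctant_inter_disc] at hlim
  have hinj : (fun p : ℕ × ℕ => (⟨p.1, p.2⟩ : ℂ)).Injective := by
    rintro ⟨a, b⟩ ⟨c, d⟩ h
    simpa [Complex.ext_iff] using h
  refine (hlim.comp tendsto_natCast_atTop_atTop).congr fun N => ?_
  rw [Function.comp_apply, ← image_octantPoints_eq, Nat.card_coe_set_eq,
    ncard_image_of_injective _ hinj, ncard_coe_finset]

end Octant

section Coprime

/-- The points of `octantPoints N` visible from the origin, i.e. with coprime coordinates. -/
def coprimePoints (N : ℕ) : Finset (ℕ × ℕ) :=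
  {p ∈ octantPoints N | Nat.gcd p.1 p.2 = 1}

lemma filter_dvd_gcd_octantPoints (N : ℕ) {d : ℕ} (hd : d ≠ 0) :
    {p ∈ octantPoints N | d ∣ Nat.gcd p.1 p.2} =
      (octantPoints (N / d ^ 2)).image fun p => (d * p.1, d * p.2) := by
  have hscale (a b : ℕ) : (d * a, d * b) ∈ octantPoints N ↔ (a, b) ∈ octantPoints (N / d ^ 2) := by
    simp only [mem_octantPoints, mul_pow, mul_pos_iff_of_pos_left hd.bot_lt,
      mul_lt_mul_iff_right₀ hd.bot_lt, Nat.le_div_iff_mul_le (pow_pos hd.bot_lt 2),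
      mul_comm (d ^ 2), add_mul]
  ext ⟨x, y⟩
  simp only [Finset.mem_filter, Finset.mem_image, Prod.mk.injEq, Prod.exists, Nat.dvd_gcd_iff]
  constructor
  · rintro ⟨h, ⟨a, rfl⟩, b, rfl⟩
    exact ⟨a, b, (hscale a b).1 h, rfl, rfl⟩
  · rintro ⟨a, b, h, rfl, rfl⟩
    exact ⟨(hscale a b).2 h, dvd_mul_right d a, dvd_mul_right d b⟩

lemma card_filter_dvd_gcd_octantPoints (N : ℕ) {d : ℕ} (hd : d ≠ 0) :
    {p ∈ octantPoints N | d ∣ Nat.gcd p.1 p.2}.card = (octantPoints (N / d ^ 2)).card := by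
  rw [filter_dvd_gcd_octantPoints N hd]
  refine Finset.card_image_of_injective _ fun p q h => ?_
  simpa [hd, Prod.ext_iff] using h

lemma hasSum_card_coprimePoints (N : ℕ) :
    HasSum (fun d => (μ d : ℝ) * (octantPoints (N / d ^ 2)).card) (coprimePoints N).card := by
  have hgcd : ∀ p ∈ octantPoints N, Nat.gcd p.1 p.2 ≠ 0 := fun p hp =>
    (Nat.gcd_pos_of_pos_right _ (mem_octantPoints.1 hp).1).ne'
  refine (hasSum_moebius_mul_card_filter_dvd (octantPoints N) hgcd).congr_fun fun d => ?_
  rcases eq_or_ne d 0 with rfl | hd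
  · simp
  · rw [card_filter_dvd_gcd_octantPoints N hd]

theorem tendsto_card_coprimePoints_div :
    Tendsto (fun N : ℕ => ((coprimePoints N).card : ℝ) / N) atTop
      (𝓝 (6 / Real.pi ^ 2 * (Real.pi / 8))) :=
  tendsto_div_of_hasSum_comp_natDiv (f := fun N => ((octantPoints N).card : ℝ))
    (k := fun d : ℕ => d ^ 2) (by exact_mod_cast hasSum_moebius_div_sq)
    (by simp [octantPoints_zero]) tendsto_card_octantPoints_div hasSum_card_coprimePoints

end Coprime

section Euclid

/-- The pairs `(m, n)` of coprime integers of opposite parity, with `0 < n < m` and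
`m² + n² ≤ N`, that parametrize in Euclid's formula the primitive Pythagorean triples with
hypotenuse at most `N`. -/
def euclidPairs (N : ℕ) : Finset (ℕ × ℕ) :=
  {p ∈ coprimePoints N | Odd (p.1 - p.2)}

lemma coe_euclidPairs (N : ℕ) :
    (euclidPairs N : Set (ℕ × ℕ)) = {p : ℕ × ℕ | Nat.gcd p.1 p.2 = 1 ∧ 1 ≤ p.2 ∧ p.2 < p.1 ∧
      p.1 ^ 2 + p.2 ^ 2 ≤ N ∧ Odd (p.1 - p.2)} := by
  ext p
  simp only [euclidPairs, coprimePoints, Finset.coe_filter, Finset.mem_filter, mem_octantPoints,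
    Set.mem_ofPred_eq, Nat.succ_le_iff]
  tauto

lemma coprime_add_sub_iff {a b : ℕ} (hba : b ≤ a) (hodd : Odd (a - b)) :
    Nat.Coprime (a + b) (a - b) ↔ Nat.Coprime a b := by
  obtain ⟨c, rfl⟩ := Nat.exists_eq_add_of_le hba
  rw [Nat.add_sub_cancel_left] at hodd ⊢
  calc Nat.Coprime (b + c + b) c ↔ Nat.Coprime (2 * b + c) c := by
        rw [add_right_comm, two_mul]
    _ ↔ Nat.Coprime b c := by
        rw [Nat.coprime_add_self_left, Nat.coprime_mul_iff_left,
          and_iff_right (Nat.coprime_two_left.2 hodd)]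
    _ ↔ Nat.Coprime (b + c) b := by
        rw [Nat.coprime_self_add_left, Nat.coprime_comm]

lemma add_sub_mem_octantPoints_iff {N a b : ℕ} (hba : b ≤ a) :
    (a + b, a - b) ∈ octantPoints N ↔ (a, b) ∈ octantPoints (N / 2) := by
  obtain ⟨c, rfl⟩ := Nat.exists_eq_add_of_le hba
  have hnorm : (b + c + b) ^ 2 + c ^ 2 = ((b + c) ^ 2 + b ^ 2) * 2 := by ring
  simp only [mem_octantPoints, Nat.add_sub_cancel_left, hnorm, Nat.le_div_iff_mul_le two_pos]
  lia

lemma filter_not_odd_coprimePoints (N : ℕ) :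
    {p ∈ coprimePoints N | ¬ Odd (p.1 - p.2)} =
      (euclidPairs (N / 2)).image fun p => (p.1 + p.2, p.1 - p.2) := by
  ext ⟨x, y⟩
  simp only [euclidPairs, coprimePoints, Finset.mem_filter, Finset.mem_image, Prod.mk.injEq,
    Prod.exists]
  constructor
  · rintro ⟨⟨hmem, hcop⟩, heven⟩
    obtain ⟨c, hc⟩ := Nat.not_odd_iff_even.1 heven
    obtain rfl : x = y + c + c := by have := (mem_octantPoints.1 hmem).2.1; lia
    have hy : Odd y := by
      by_contra hy
      have h2y : 2 ∣ y := (Nat.not_odd_iff_even.1 hy).two_dvd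
      have := Nat.dvd_gcd (show 2 ∣ y + c + c by lia) h2y
      lia
    have hsub : y + c - c = y := y.add_sub_cancel c
    refine ⟨y + c, c, ⟨⟨?_, ?_⟩, by rwa [hsub]⟩, rfl, hsub⟩
    · rwa [← add_sub_mem_octantPoints_iff (Nat.le_add_left c y), hsub]
    · rwa [← Nat.coprime_iff_gcd_eq_one,
        ← coprime_add_sub_iff (Nat.le_add_left c y) (by rwa [hsub]), hsub]
  · rintro ⟨a, b, ⟨⟨hmem, hcop⟩, hodd⟩, rfl, rfl⟩
    have hba : b ≤ a := (mem_octantPoints.1 hmem).2.1.le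
    refine ⟨⟨(add_sub_mem_octantPoints_iff hba).2 hmem, (coprime_add_sub_iff hba hodd).2 hcop⟩, ?_⟩
    rw [Nat.not_odd_iff_even]
    exact ⟨b, by lia⟩

lemma card_filter_not_odd_coprimePoints (N : ℕ) :
    {p ∈ coprimePoints N | ¬ Odd (p.1 - p.2)}.card = (euclidPairs (N / 2)).card := by
  rw [filter_not_odd_coprimePoints]
  refine Finset.card_image_of_injOn fun p hp q hq h => ?_
  simp only [euclidPairs, coprimePoints, Finset.coe_filter, Finset.mem_filter, mem_octantPoints,
    Set.mem_ofPred_eq] at hp hq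
  simp only [Prod.mk.injEq] at h
  exact Prod.ext (by lia) (by lia)

lemma card_euclidPairs_add (N : ℕ) :
    (euclidPairs N).card + (euclidPairs (N / 2)).card = (coprimePoints N).card := by
  rw [← card_filter_not_odd_coprimePoints, euclidPairs]
  exact Finset.card_filter_add_card_filter_not _

lemma hasSum_card_euclidPairs (N : ℕ) :
    HasSum (fun k => (-1 : ℝ) ^ k * (coprimePoints (N / 2 ^ k)).card) (euclidPairs N).card :=
  hasSum_neg_one_pow_mul_comp_div_pow (f := fun N => ((coprimePoints N).card : ℝ))
    (g := fun N => ((euclidPairs N).card : ℝ)) one_lt_two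
    (by simp [euclidPairs, coprimePoints, octantPoints_zero])
    (fun N => by exact_mod_cast card_euclidPairs_add N) N

theorem tendsto_card_euclidPairs_div :
    Tendsto (fun N : ℕ => ((euclidPairs N).card : ℝ) / N) atTop (𝓝 (1 / (2 * Real.pi))) := by
  have hgeom : HasSum (fun k : ℕ => (-1 : ℝ) ^ k / (2 ^ k : ℕ)) (2 / 3) := by
    convert hasSum_geometric_of_abs_lt_one (r := (-1 / 2 : ℝ)) (by norm_num) using 1
    · ext k
      rw [div_pow, Nat.cast_pow, Nat.cast_ofNat]
    · norm_num
  have hlim := tendsto_div_of_hasSum_comp_natDiv (k := fun k => 2 ^ k)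
    (f := fun N => ((coprimePoints N).card : ℝ)) hgeom
    (by simp [coprimePoints, octantPoints_zero]) tendsto_card_coprimePoints_div
    hasSum_card_euclidPairs
  have hvalue : 2 / 3 * (6 / Real.pi ^ 2 * (Real.pi / 8)) = 1 / (2 * Real.pi) := by
    field_simp
    norm_num
  rwa [hvalue] at hlim

end Euclid

/-- **Counting primitive Pythagorean triples.**  The number of pairs of coprime positive
integers `m > n ≥ 1` of different parity with `m² + n² ≤ N` — equivalently, the number of
primitive Pythagorean triples with hypotenuse at most `N` (not distinguishing `(x,y,z)`
from `(y,x,z)`) — is asymptotic to `N/(2π)`. -/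
theorem primitive_pythagorean_triples_count :
    Tendsto
      (fun N : ℕ =>
        (1 : ℝ) / N *
          ({p : ℕ × ℕ | Nat.gcd p.1 p.2 = 1 ∧ 1 ≤ p.2 ∧ p.2 < p.1 ∧
              p.1 ^ 2 + p.2 ^ 2 ≤ N ∧ Odd (p.1 - p.2)}.ncard : ℝ))
      atTop (nhds (1 / (2 * Real.pi))) := by
  simp only [← coe_euclidPairs, Set.ncard_coe_finset, one_div_mul_eq_div]
  exact tendsto_card_euclidPairs_div
end

section
/- For real numbers 0 ≤ α < β ≤ 1, let P(N;α,β) = {(m,n) ∈ ℕ×ℕ : gcd(m,n) = 1, m ≥ 1, n ≥ 1, α ≤ n/m ≤ β, m − n odd, m² + n² ≤ N}. Then lim_{N→∞} (1/N)·|P(N;α,β)| = (2/π²)·arctan((β−α)/(1+αβ)). -/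
open Filter

/-!
In a plane convex cone `X` meeting the unit disk in area `V`, the disk `m² + n² ≤ c` contains
asymptotically `V c` integer points, half of which lie in the sublattice `2 ∣ m + n` of index two,
so `V c / 2` have coordinates of opposite parity. Among the latter the points divisible by `d` are,
for odd `d`, the `d`-fold multiples of the same kind of points with `c / d²` in place of `c`, and
there are none for even `d`. Möbius inversion, with dominated convergence in the sum over `d`,
multiplies the density by `∑_{d odd} μ(d) / d² = 8 / π²`, the value at `2` of the inverse of the
zeta function without its Euler factor at `2`. For the sector of slopes between `α` and `β`, polar
coordinates give `V = (arctan β - arctan α) / 2`.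
-/

section Moebius

open ArithmeticFunction

open scoped ArithmeticFunction.Moebius ArithmeticFunction.zeta LSeries.notation

theorem hasSum_ite_dvd_moebius {n : ℕ} (hn : n ≠ 0) :
    HasSum (fun d : ℕ => if d ∣ n then (μ d : ℝ) else 0) (if n = 1 then 1 else 0) := by
  have hsum : ∑ d ∈ n.divisors, (if d ∣ n then (μ d : ℝ) else 0) = if n = 1 then 1 else 0 :=
    calc ∑ d ∈ n.divisors, (if d ∣ n then (μ d : ℝ) else 0)
        = ((μ : ArithmeticFunction ℝ) * ζ) n := by
          rw [coe_mul_zeta_apply]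
          exact Finset.sum_congr rfl fun d hd => if_pos (Nat.dvd_of_mem_divisors hd)
      _ = if n = 1 then 1 else 0 := by rw [coe_moebius_mul_coe_zeta, one_apply]
  rw [← hsum]
  refine hasSum_sum_of_ne_finset_zero fun d hd => if_neg fun hdvd => hd ?_
  exact Nat.mem_divisors.mpr ⟨hdvd, hn⟩

theorem hasSum_moebius_mul_ncard_dvd {σ : Type*} {A : Set σ} (hA : A.Finite) {g : σ → ℕ}
    (hg : ∀ a ∈ A, g a ≠ 0) :
    HasSum (fun d : ℕ => (μ d : ℝ) * {a ∈ A | d ∣ g a}.ncard) {a ∈ A | g a = 1}.ncard := by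
  classical
  lift A to Finset σ using hA
  have hcard (p : σ → Prop) [DecidablePred p] :
      ({a ∈ (A : Set σ) | p a}.ncard : ℝ) = ∑ a ∈ A, if p a then 1 else 0 := by
    rw [Finset.sum_boole, ← Set.ncard_coe_finset, Finset.coe_filter]
    rfl
  simp only [hcard, Finset.mul_sum, mul_ite, mul_one, mul_zero]
  exact hasSum_sum fun a ha => hasSum_ite_dvd_moebius (hg a ha)

theorem tsum_moebius_coprime_div_sq (N : ℕ) [NeZero N] :
    ∑' d : ℕ, (if d.Coprime N then (μ d : ℝ) else 0) / (d : ℝ) ^ 2 =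
      6 / Real.pi ^ 2 * ∏ p ∈ N.primeFactors, (1 - 1 / (p : ℝ) ^ 2)⁻¹ := by
  set S := ∑' d : ℕ, (if d.Coprime N then (μ d : ℝ) else 0) / (d : ℝ) ^ 2 with hS
  have hcpow (n : ℕ) : (n : ℂ) ^ (2 : ℂ) = (n : ℂ) ^ 2 := mod_cast Complex.cpow_natCast n 2
  have hL : LSeries (↗(1 : DirichletCharacter ℂ N) * ↗μ) 2 = S := by
    rw [LSeries, hS, Complex.ofReal_tsum]
    refine tsum_congr fun d => ?_
    rcases eq_or_ne d 0 with rfl | hd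
    · simp
    rw [LSeries.term_of_ne_zero hd, hcpow, Pi.mul_apply]
    by_cases h : d.Coprime N
    · rw [if_pos h]
      simp [MulChar.one_apply ((ZMod.isUnit_iff_coprime d N).mpr h)]
    · simp [h, MulChar.map_nonunit _ (mt (ZMod.isUnit_iff_coprime d N).mp h)]
  have hs : 1 < (2 : ℂ).re := by norm_num
  have hmul : (∏ p ∈ N.primeFactors, (1 - 1 / (p : ℝ) ^ 2)) * (Real.pi ^ 2 / 6) * S = 1 := by
    have h := DirichletCharacter.LSeries.mul_mu_eq_one (1 : DirichletCharacter ℂ N) hs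
    rw [hL, ← DirichletCharacter.LFunction_eq_LSeries _ hs,
      ← DirichletCharacter.LFunctionTrivChar,
      DirichletCharacter.LFunctionTrivChar_eq_mul_riemannZeta (by norm_num), riemannZeta_two] at h
    simp only [Complex.cpow_neg, hcpow, ← one_div] at h
    apply Complex.ofReal_injective
    push_cast
    exact h
  rw [Finset.prod_inv_distrib]
  have hprod := left_ne_zero_of_mul (left_ne_zero_of_mul_eq_one hmul)
  field_simp at hmul ⊢
  linear_combination hmul

theorem tsum_moebius_odd_div_sq :
    ∑' d : ℕ, (if Odd d then (μ d : ℝ) else 0) / (d : ℝ) ^ 2 = 8 / Real.pi ^ 2 := by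
  have h := tsum_moebius_coprime_div_sq 2
  simp only [Nat.coprime_two_right, Nat.prime_two.primeFactors, Finset.prod_singleton] at h
  rw [h]
  push_cast
  ring

end Moebius

section Dilation

variable {F : ℝ → ℝ} {L : ℝ}

theorem exists_forall_norm_le_mul (hmono : Monotone F) (hzero : ∀ c < 1, F c = 0)
    (hF : Tendsto (fun c => F c / c) atTop (nhds L)) : ∃ K, ∀ c, 0 ≤ c → ‖F c‖ ≤ K * c := by
  obtain ⟨c₀, h₀⟩ := eventually_atTop.mp (hF.eventually_lt_const (lt_add_one L))
  have hnonneg (c : ℝ) : 0 ≤ F c :=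
    (hzero (min c 0) (by simp)).symm.le.trans (hmono (min_le_left c 0))
  refine ⟨max (F c₀) (L + 1), fun c hc => ?_⟩
  rw [Real.norm_of_nonneg (hnonneg c)]
  rcases lt_or_ge c 1 with h1 | h1
  · rw [hzero c h1]
    exact mul_nonneg ((hnonneg c₀).trans (le_max_left _ _)) hc
  rcases le_total c c₀ with h | h
  · calc F c ≤ F c₀ := hmono h
      _ ≤ F c₀ * c := le_mul_of_one_le_right (hnonneg c₀) h1
      _ ≤ max (F c₀) (L + 1) * c := by gcongr; exact le_max_left _ _
  · calc F c ≤ (L + 1) * c := ((div_lt_iff₀ (by linarith)).mp (h₀ c h)).le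
      _ ≤ max (F c₀) (L + 1) * c := by gcongr; exact le_max_right _ _

theorem tendsto_tsum_mul_comp_div_sq_div (hmono : Monotone F) (hzero : ∀ c < 1, F c = 0)
    (hF : Tendsto (fun c => F c / c) atTop (nhds L)) {a : ℕ → ℝ} {C : ℝ} (ha : ∀ d, ‖a d‖ ≤ C) :
    Tendsto (fun c => (∑' d : ℕ, a d * F (c / (d : ℝ) ^ 2)) / c) atTop
      (nhds ((∑' d : ℕ, a d / (d : ℝ) ^ 2) * L)) := by
  obtain ⟨K, hK⟩ := exists_forall_norm_le_mul hmono hzero hF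
  simp only [← tsum_div_const, ← tsum_mul_right]
  refine tendsto_tsum_of_dominated_convergence (bound := fun d : ℕ => C * K * (1 / (d : ℝ) ^ 2))
    ((Real.summable_one_div_nat_pow.mpr one_lt_two).mul_left _) (fun d => ?_) ?_
  · rcases eq_or_ne d 0 with rfl | hd
    · simp [hzero 0 one_pos]
    have hd' : (0 : ℝ) < (d : ℝ) ^ 2 := by positivity
    refine ((hF.comp (tendsto_id.atTop_div_const hd')).const_mul (a d / (d : ℝ) ^ 2)).congr
      fun c => ?_
    simp only [Function.comp_apply, id_eq]
    field_simp
  · filter_upwards [eventually_gt_atTop 0] with c hc d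
    calc ‖a d * F (c / (d : ℝ) ^ 2) / c‖
        = ‖a d‖ * ‖F (c / (d : ℝ) ^ 2)‖ / c := by
          rw [norm_div, norm_mul, Real.norm_of_nonneg hc.le]
      _ ≤ C * (K * (c / (d : ℝ) ^ 2)) / c := by
          gcongr
          · exact (norm_nonneg _).trans (ha d)
          · exact ha d
          · exact hK _ (by positivity)
      _ = C * K * (1 / (d : ℝ) ^ 2) := by field_simp

end Dilation

section Lattice

open MeasureTheory Bornology

variable {ι : Type*}

theorem mem_span_basisFun_iff [Finite ι] {x : ι → ℝ} :
    x ∈ Submodule.span ℤ (Set.range (Pi.basisFun ℝ ι)) ↔ ∃ v : ι → ℤ, Int.cast ∘ v = x := by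
  simp only [Module.Basis.mem_span_iff_repr_mem, Pi.basisFun_repr, algebraMap_int_eq, eq_intCast,
    Set.mem_range, Classical.skolem, funext_iff, Function.comp_apply]

theorem covolume_span_basisFun [Fintype ι] :
    ZLattice.covolume (Submodule.span ℤ (Set.range (Pi.basisFun ℝ ι))) = 1 := by
  classical
  rw [ZLattice.covolume_eq_measure_fundamentalDomain _ volume
    (ZSpan.isAddFundamentalDomain _ volume), ZSpan.volume_real_fundamentalDomain,
    ← Pi.basisFun_det_apply, Module.Basis.det_self, abs_one]

theorem card_inter_span_basisFun [Finite ι] (A : Set (ι → ℝ)) :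
    Nat.card ↑(A ∩ Submodule.span ℤ (Set.range (Pi.basisFun ℝ ι))) =
      {v : ι → ℤ | Int.cast ∘ v ∈ A}.ncard := by
  have hinj : Function.Injective fun v : ι → ℤ => ((↑) : ℤ → ℝ) ∘ v :=
    Int.cast_injective.comp_left
  rw [Nat.card_coe_set_eq, ← Set.ncard_image_of_injective _ hinj]
  congr 1
  ext x
  simp only [Set.mem_inter_iff, SetLike.mem_coe, mem_span_basisFun_iff, Set.mem_image,
    Set.mem_ofPred_eq]
  exact ⟨fun ⟨hx, v, hv⟩ => ⟨v, hv ▸ hx, hv⟩, fun ⟨v, hx, hv⟩ => ⟨hv ▸ hx, v, hv⟩⟩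

theorem finite_setOf_cast_mem [Finite ι] {A : Set (ι → ℝ)} (hA : IsBounded A) :
    {v : ι → ℤ | Int.cast ∘ v ∈ A}.Finite := by
  have := Fintype.ofFinite ι
  have h := Real.isometry_intCast.postcomp_pi.antilipschitz.isBounded_preimage hA
  exact h.isCompact_closure.finite_of_discrete.subset subset_closure

variable [Fintype ι] [DecidableEq ι] {M : Matrix ι ι ℤ}

theorem ncard_cast_mem_preimage_toLin' (hM : M.det ≠ 0) (A : Set (ι → ℝ)) :
    {v : ι → ℤ | Int.cast ∘ v ∈ Matrix.toLin' (M.map (Int.cast : ℤ → ℝ)) ⁻¹' A}.ncard =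
      {v : ι → ℤ | Int.cast ∘ v ∈ A ∧ v ∈ Set.range M.mulVec}.ncard := by
  have hcast (v : ι → ℤ) : Matrix.toLin' (M.map (Int.cast : ℤ → ℝ)) (Int.cast ∘ v) =
      Int.cast ∘ M.mulVec v :=
    funext fun i => (RingHom.map_mulVec (Int.castRingHom ℝ) M v i).symm
  simp only [Set.mem_preimage, hcast]
  rw [← Set.ncard_image_of_injective _
    (Matrix.mulVec_injective_of_det_mem_nonZeroDivisors (mem_nonZeroDivisors_of_ne_zero hM))]
  congr 1
  ext w
  constructor
  · rintro ⟨v, hv, rfl⟩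
    exact ⟨hv, v, rfl⟩
  · rintro ⟨hw, v, rfl⟩
    exact ⟨v, hw, rfl⟩

variable {X : Set (ι → ℝ)} {F : (ι → ℝ) → ℝ}

theorem tendsto_ncard_range_mulVec_div [Nonempty ι]
    (hX : ∀ ⦃x⦄ ⦃r : ℝ⦄, x ∈ X → 0 < r → r • x ∈ X)
    (hF : ∀ x ⦃r : ℝ⦄, 0 ≤ r → F (r • x) = r ^ Fintype.card ι * F x)
    (hbdd : IsBounded {x ∈ X | F x ≤ 1}) (hmeas : MeasurableSet {x ∈ X | F x ≤ 1})
    (hfr : volume (frontier {x ∈ X | F x ≤ 1}) = 0) (hM : M.det ≠ 0) :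
    Tendsto (fun c : ℝ => ({v : ι → ℤ | (Int.cast ∘ v ∈ X ∧ F (Int.cast ∘ v) ≤ c) ∧
        v ∈ Set.range M.mulVec}.ncard : ℝ) / c)
      atTop (nhds (volume.real {x ∈ X | F x ≤ 1} / |(M.det : ℝ)|)) := by
  set T := Matrix.toLin' (M.map (Int.cast : ℤ → ℝ)) with hT
  have hdet : T.det = M.det := by
    rw [hT, LinearMap.det_toLin']
    exact (Int.cast_det M).symm
  have hTdet : T.det ≠ 0 := hdet ▸ Int.cast_ne_zero.mpr hM
  set e := (T.equivOfDetNeZero hTdet).toContinuousLinearEquiv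
  have hfr' : volume (frontier (T ⁻¹' {x ∈ X | F x ≤ 1})) = 0 := by
    rw [show T ⁻¹' {x ∈ X | F x ≤ 1} = e.toHomeomorph ⁻¹' {x ∈ X | F x ≤ 1} from rfl,
      ← e.toHomeomorph.preimage_frontier]
    exact (Measure.addHaar_preimage_continuousLinearEquiv volume e _).trans (by rw [hfr, mul_zero])
  have hvol : volume.real (T ⁻¹' {x ∈ X | F x ≤ 1}) =
      volume.real {x ∈ X | F x ≤ 1} / |(M.det : ℝ)| := by
    rw [measureReal_def, Measure.addHaar_preimage_linearMap volume hTdet, ENNReal.toReal_mul,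
      ENNReal.toReal_ofReal (abs_nonneg _), hdet, abs_inv, ← measureReal_def, inv_mul_eq_div]
  have h := ZLattice.covolume.tendsto_card_le_div (X := T ⁻¹' X) (F := F ∘ T)
    (Submodule.span ℤ (Set.range (Pi.basisFun ℝ ι)))
    (fun x r hx hr => by simpa only [Set.mem_preimage, map_smul] using hX hx hr)
    (fun x r hr => by simp only [Function.comp_apply, map_smul, hF _ hr])
    (e.antilipschitz.isBounded_preimage hbdd) (e.continuous.measurable hmeas) hfr'
  rw [covolume_span_basisFun, div_one] at h
  rw [← hvol]
  refine h.congr fun c => ?_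
  rw [card_inter_span_basisFun]
  exact congrArg (fun n : ℕ => (n : ℝ) / c) (ncard_cast_mem_preimage_toLin' hM {x ∈ X | F x ≤ c})

end Lattice

section Polar

open MeasureTheory

theorem volume_real_eq_half_of_polar {K : Set (ℝ × ℝ)} {T : Set ℝ} (hK : MeasurableSet K)
    (hT : MeasurableSet T) (hTs : T ⊆ Set.Ioo (-Real.pi) Real.pi)
    (hKT : ∀ p ∈ polarCoord.target, polarCoord.symm p ∈ K ↔ p.1 ≤ 1 ∧ p.2 ∈ T) :
    volume.real K = volume.real T / 2 := by
  have htarget : polarCoord.target ∩ Set.Ioc 0 1 ×ˢ T = Set.Ioc 0 1 ×ˢ T :=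
    Set.inter_eq_right.mpr (Set.prod_mono (fun r hr => hr.1) hTs)
  have hind : ∀ p ∈ polarCoord.target, p.1 • K.indicator 1 (polarCoord.symm p) =
      (Set.Ioc (0 : ℝ) 1 ×ˢ T).indicator (fun p => p.1 * 1) p := by
    intro p hp
    have hmem : polarCoord.symm p ∈ K ↔ p ∈ Set.Ioc (0 : ℝ) 1 ×ˢ T := by
      have hr : 0 < p.1 := hp.1
      rw [hKT p hp, Set.mem_prod, Set.mem_Ioc, and_iff_right hr]
    by_cases h : polarCoord.symm p ∈ K
    · rw [Set.indicator_of_mem h, Set.indicator_of_mem (hmem.mp h), smul_eq_mul, Pi.one_apply]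
    · rw [Set.indicator_of_notMem h, Set.indicator_of_notMem (mt hmem.mpr h), smul_zero]
  calc volume.real K = ∫ p, K.indicator (1 : ℝ × ℝ → ℝ) p := (integral_indicator_one hK).symm
    _ = ∫ p in polarCoord.target, (Set.Ioc (0 : ℝ) 1 ×ˢ T).indicator (fun p => p.1 * 1) p := by
      rw [← integral_comp_polarCoord_symm,
        setIntegral_congr_fun polarCoord.open_target.measurableSet hind]
    _ = ∫ p in Set.Ioc (0 : ℝ) 1 ×ˢ T, p.1 * 1 := by
      rw [setIntegral_indicator (measurableSet_Ioc.prod hT), htarget]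
    _ = (∫ r in (0 : ℝ)..1, r) * ∫ _ in T, (1 : ℝ) := by
      rw [intervalIntegral.integral_of_le zero_le_one, Measure.volume_eq_prod,
        setIntegral_prod_mul (fun r : ℝ => r) (fun _ : ℝ => (1 : ℝ))]
    _ = volume.real T / 2 := by
      rw [integral_id, setIntegral_const, smul_eq_mul]
      ring

theorem cos_pos_iff_of_mem_Ioo {φ : ℝ} (hφ : φ ∈ Set.Ioo (-Real.pi) Real.pi) :
    0 < Real.cos φ ↔ φ ∈ Set.Ioo (-(Real.pi / 2)) (Real.pi / 2) := by
  refine ⟨fun h => abs_lt.mp ?_, Real.cos_pos_of_mem_Ioo⟩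
  contrapose! h
  rw [← Real.cos_abs]
  exact Real.cos_nonpos_of_pi_div_two_le_of_le h (by linarith [abs_lt.mpr hφ, Real.pi_pos])

theorem slope_mem_Icc_iff_arctan {α β φ : ℝ} (hφ : φ ∈ Set.Ioo (-Real.pi) Real.pi) :
    (0 < Real.cos φ ∧ α * Real.cos φ ≤ Real.sin φ ∧ Real.sin φ ≤ β * Real.cos φ) ↔
      φ ∈ Set.Icc (Real.arctan α) (Real.arctan β) := by
  have key : φ ∈ Set.Ioo (-(Real.pi / 2)) (Real.pi / 2) →
      ((α * Real.cos φ ≤ Real.sin φ ∧ Real.sin φ ≤ β * Real.cos φ) ↔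
        φ ∈ Set.Icc (Real.arctan α) (Real.arctan β)) := by
    intro h
    have hcos := Real.cos_pos_of_mem_Ioo h
    rw [← le_div_iff₀ hcos, ← div_le_iff₀ hcos, ← Real.tan_eq_sin_div_cos,
      ← Real.arctan_le_arctan_iff (x := α),
      ← Real.arctan_le_arctan_iff (y := β), Real.arctan_tan h.1 h.2, Set.mem_Icc]
  rw [cos_pos_iff_of_mem_Ioo hφ, ← and_congr_right_iff.mpr fun h => (key h).symm]
  exact and_iff_right_of_imp fun h => ⟨(Real.neg_pi_div_two_lt_arctan α).trans_le h.1,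
    h.2.trans_lt (Real.arctan_lt_pi_div_two β)⟩
end Polar

section PlaneCone

open MeasureTheory Bornology

open scoped ArithmeticFunction.Moebius

variable (X : ConvexCone ℝ (Fin 2 → ℝ))

/-- The part of the plane cone `X` in the closed disk of squared radius `c`. -/
def diskPart (c : ℝ) : Set (Fin 2 → ℝ) :=
  {x ∈ X | x 0 ^ 2 + x 1 ^ 2 ≤ c}

/-- The integer points with coordinates of different parity in `diskPart X c`. -/
def oddPoints (c : ℝ) : Set (Fin 2 → ℤ) :=
  {v | Int.cast ∘ v ∈ diskPart X c ∧ Odd (v 0 + v 1)}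

theorem isBounded_diskPart (c : ℝ) : IsBounded (diskPart X c) := by
  refine (Metric.isBounded_closedBall (x := (0 : Fin 2 → ℝ)) (r := √c)).subset fun x hx => ?_
  rw [mem_closedBall_zero_iff, pi_norm_le_iff_of_nonneg (Real.sqrt_nonneg c)]
  have hx := hx.2
  refine Fin.forall_fin_two.mpr ⟨Real.abs_le_sqrt ?_, Real.abs_le_sqrt ?_⟩ <;>
    nlinarith only [sq_nonneg (x 0), sq_nonneg (x 1), hx]

theorem convex_diskPart (c : ℝ) : Convex ℝ (diskPart X c) := by
  have h (i : Fin 2) : ConvexOn ℝ Set.univ fun x : Fin 2 → ℝ => x i ^ 2 :=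
    (even_two.convexOn_pow (𝕜 := ℝ)).comp_linearMap
      (LinearMap.proj (R := ℝ) (φ := fun _ : Fin 2 => ℝ) i)
  have hdisk := ((h 0).add (h 1)).convex_le c
  simp only [Set.mem_univ, true_and] at hdisk
  exact X.convex.inter hdisk

theorem measurableSet_diskPart (hX : MeasurableSet (X : Set (Fin 2 → ℝ))) (c : ℝ) :
    MeasurableSet (diskPart X c) :=
  hX.inter (measurableSet_le (f := fun x : Fin 2 → ℝ => x 0 ^ 2 + x 1 ^ 2) (by fun_prop)
    measurable_const)

theorem even_add_iff_mem_range_mulVec {v : Fin 2 → ℤ} :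
    Even (v 0 + v 1) ↔ v ∈ Set.range (!![1, 1; 1, -1] : Matrix (Fin 2) (Fin 2) ℤ).mulVec := by
  constructor
  · rintro ⟨k, hk⟩
    refine ⟨![k, v 0 - k], funext (Fin.forall_fin_two.mpr ⟨?_, ?_⟩)⟩
    · simp [Matrix.mulVec, dotProduct]
    · have hv : k + (k - v 0) = v 1 := by omega
      simpa [Matrix.mulVec, dotProduct] using hv
  · rintro ⟨w, rfl⟩
    have hw : w 0 + w 1 + (w 0 - w 1) = w 0 + w 0 := by ring
    exact ⟨w 0, by simpa [Matrix.mulVec, dotProduct, sub_eq_add_neg] using hw⟩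

variable {X}

theorem tendsto_ncard_range_mulVec_diskPart_div (hX : MeasurableSet (X : Set (Fin 2 → ℝ)))
    {M : Matrix (Fin 2) (Fin 2) ℤ} (hM : M.det ≠ 0) :
    Tendsto (fun c : ℝ => ({v : Fin 2 → ℤ | Int.cast ∘ v ∈ diskPart X c ∧
        v ∈ Set.range M.mulVec}.ncard : ℝ) / c)
      atTop (nhds (volume.real (diskPart X 1) / |(M.det : ℝ)|)) :=
  tendsto_ncard_range_mulVec_div (X := (X : Set (Fin 2 → ℝ))) (F := fun x => x 0 ^ 2 + x 1 ^ 2)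
    (fun _ _ hx hr => X.smul_mem hr hx)
    (fun x r _ => by simp only [Pi.smul_apply, smul_eq_mul, Fintype.card_fin]; ring)
    (isBounded_diskPart X 1) (measurableSet_diskPart X hX 1)
    ((convex_diskPart X 1).addHaar_frontier volume) hM

theorem tendsto_ncard_oddPoints_div (hX : MeasurableSet (X : Set (Fin 2 → ℝ))) :
    Tendsto (fun c => ((oddPoints X c).ncard : ℝ) / c) atTop
      (nhds (volume.real (diskPart X 1) / 2)) := by
  have hall := tendsto_ncard_range_mulVec_diskPart_div hX
    (M := (1 : Matrix (Fin 2) (Fin 2) ℤ)) (by simp)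
  have heven := tendsto_ncard_range_mulVec_diskPart_div hX
    (M := !![1, 1; 1, -1]) (by simp [Matrix.det_fin_two])
  simp only [← even_add_iff_mem_range_mulVec] at heven
  have hsdiff (c : ℝ) : oddPoints X c =
      {v | Int.cast ∘ v ∈ diskPart X c ∧ v ∈ Set.range (1 : Matrix (Fin 2) (Fin 2) ℤ).mulVec} \
        {v | Int.cast ∘ v ∈ diskPart X c ∧ Even (v 0 + v 1)} := by
    ext v
    have hv : v ∈ Set.range (1 : Matrix (Fin 2) (Fin 2) ℤ).mulVec := ⟨v, Matrix.one_mulVec v⟩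
    simp only [oddPoints, Set.mem_sdiff, Set.mem_ofPred_eq, ← Int.not_even_iff_odd]
    tauto
  convert hall.sub heven using 2 with c
  · rw [← sub_div, hsdiff, Set.cast_ncard_sdiff]
    · exact fun v hv => ⟨hv.1, v, Matrix.one_mulVec v⟩
    · exact (finite_setOf_cast_mem (isBounded_diskPart X c)).subset fun v hv => hv.1
  · norm_num [Matrix.det_fin_two]
    ring

theorem monotone_ncard_oddPoints : Monotone fun c => ((oddPoints X c).ncard : ℝ) := by
  intro c c' h
  refine Nat.cast_le.mpr (Set.ncard_le_ncard ?_ ?_)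
  · exact fun v hv => ⟨⟨hv.1.1, hv.1.2.trans h⟩, hv.2⟩
  · exact (finite_setOf_cast_mem (isBounded_diskPart X c')).subset fun v hv => hv.1

theorem gcd_ne_zero_of_mem_oddPoints {c : ℝ} {v : Fin 2 → ℤ} (hv : v ∈ oddPoints X c) :
    Int.gcd (v 0) (v 1) ≠ 0 := by
  intro h
  obtain ⟨h0, h1⟩ := Int.gcd_eq_zero_iff.mp h
  simpa [h0, h1] using hv.2

theorem oddPoints_eq_empty {c : ℝ} (hc : c < 1) : oddPoints X c = ∅ := by
  refine Set.eq_empty_of_forall_notMem fun v hv => ?_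
  have hreal : (v 0 : ℝ) ^ 2 + (v 1 : ℝ) ^ 2 < 1 := hv.1.2.trans_lt hc
  have hlt : v 0 ^ 2 + v 1 ^ 2 < 1 := mod_cast hreal
  have h0 : v 0 = 0 := sq_eq_zero_iff.mp (by linarith [sq_nonneg (v 0), sq_nonneg (v 1)])
  have h1 : v 1 = 0 := sq_eq_zero_iff.mp (by linarith [sq_nonneg (v 0), sq_nonneg (v 1)])
  simpa [h0, h1] using hv.2

theorem natCast_smul_mem_oddPoints_iff {d : ℕ} (hd : Odd d) {c : ℝ} {v : Fin 2 → ℤ} :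
    (d : ℤ) • v ∈ oddPoints X c ↔ v ∈ oddPoints X (c / (d : ℝ) ^ 2) := by
  have hd0 : (0 : ℝ) < d := mod_cast hd.pos
  have hcast : (Int.cast ∘ ((d : ℤ) • v) : Fin 2 → ℝ) = (d : ℝ) • (Int.cast ∘ v) := by
    ext i
    simp
  have hparity : Odd ((d : ℤ) * (v 0 + v 1)) ↔ Odd (v 0 + v 1) := by
    rw [Int.odd_mul, Int.odd_coe_nat, and_iff_right hd]
  simp only [oddPoints, diskPart, Set.mem_ofPred_eq, hcast, X.smul_mem_iff hd0, Pi.smul_apply,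
    smul_eq_mul, mul_pow, ← mul_add, le_div_iff₀' (pow_pos hd0 2), hparity]

theorem ncard_oddPoints_dvd_of_odd {d : ℕ} (hd : Odd d) (c : ℝ) :
    {v ∈ oddPoints X c | d ∣ Int.gcd (v 0) (v 1)}.ncard =
      (oddPoints X (c / (d : ℝ) ^ 2)).ncard := by
  have hinj : Function.Injective fun v : Fin 2 → ℤ => (d : ℤ) • v :=
    smul_right_injective _ (mod_cast hd.pos.ne')
  rw [← Set.ncard_image_of_injective (oddPoints X (c / (d : ℝ) ^ 2)) hinj]
  congr 1
  ext w
  constructor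
  · rintro ⟨hw, hdvd⟩
    rw [Int.dvd_gcd_iff] at hdvd
    obtain ⟨⟨a, ha⟩, b, hb⟩ := hdvd
    have hw' : (d : ℤ) • ![a, b] = w := funext (Fin.forall_fin_two.mpr ⟨ha.symm, hb.symm⟩)
    exact ⟨![a, b], (natCast_smul_mem_oddPoints_iff hd).mp (hw' ▸ hw), hw'⟩
  · rintro ⟨v, hv, rfl⟩
    exact ⟨(natCast_smul_mem_oddPoints_iff hd).mpr hv,
      Int.dvd_gcd (dvd_mul_right _ _) (dvd_mul_right _ _)⟩

theorem oddPoints_dvd_eq_empty_of_even {d : ℕ} (hd : Even d) (c : ℝ) :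
    {v ∈ oddPoints X c | d ∣ Int.gcd (v 0) (v 1)} = ∅ := by
  refine Set.eq_empty_of_forall_notMem fun v ⟨hv, hdvd⟩ => ?_
  have h2 : ((2 : ℕ) : ℤ) ∣ Int.gcd (v 0) (v 1) :=
    Int.natCast_dvd_natCast.mpr (hd.two_dvd.trans hdvd)
  refine Int.not_even_iff_odd.mpr hv.2 (even_iff_two_dvd.mpr (dvd_add ?_ ?_))
  · exact h2.trans (Int.gcd_dvd_left ..)
  · exact h2.trans (Int.gcd_dvd_right ..)

theorem ncard_coprime_oddPoints (c : ℝ) :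
    ({v ∈ oddPoints X c | Int.gcd (v 0) (v 1) = 1}.ncard : ℝ) =
      ∑' d : ℕ, (if Odd d then (μ d : ℝ) else 0) * (oddPoints X (c / (d : ℝ) ^ 2)).ncard := by
  have hfin : (oddPoints X c).Finite :=
    (finite_setOf_cast_mem (isBounded_diskPart X c)).subset fun v hv => hv.1
  rw [← (hasSum_moebius_mul_ncard_dvd hfin fun v hv => gcd_ne_zero_of_mem_oddPoints hv).tsum_eq]
  refine tsum_congr fun d => ?_
  split_ifs with hd
  · rw [ncard_oddPoints_dvd_of_odd hd]
  · rw [oddPoints_dvd_eq_empty_of_even (Nat.not_odd_iff_even.mp hd), Set.ncard_empty,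
      Nat.cast_zero, mul_zero, zero_mul]

theorem tendsto_ncard_coprime_oddPoints_div (hX : MeasurableSet (X : Set (Fin 2 → ℝ))) :
    Tendsto (fun c => ({v ∈ oddPoints X c | Int.gcd (v 0) (v 1) = 1}.ncard : ℝ) / c) atTop
      (nhds (4 / Real.pi ^ 2 * volume.real (diskPart X 1))) := by
  have hzero (c : ℝ) (hc : c < 1) : ((oddPoints X c).ncard : ℝ) = 0 := by
    rw [oddPoints_eq_empty hc, Set.ncard_empty, Nat.cast_zero]
  have hbound (d : ℕ) : ‖(if Odd d then (μ d : ℝ) else 0)‖ ≤ 1 := by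
    split_ifs
    · rw [Real.norm_eq_abs]
      exact mod_cast ArithmeticFunction.abs_moebius_le_one
    · simp
  simp only [ncard_coprime_oddPoints]
  convert tendsto_tsum_mul_comp_div_sq_div monotone_ncard_oddPoints hzero
    (tendsto_ncard_oddPoints_div hX) hbound using 2
  rw [tsum_moebius_odd_div_sq]
  ring

end PlaneCone

section Sector

open MeasureTheory

/-- The convex cone of the points in the right half-plane whose slope lies between `α` and `β`. -/
def sector (α β : ℝ) : ConvexCone ℝ (Fin 2 → ℝ) where
  carrier := {x | 0 < x 0 ∧ α * x 0 ≤ x 1 ∧ x 1 ≤ β * x 0}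
  smul_mem' r hr x hx := by
    simp only [Set.mem_ofPred_eq, Pi.smul_apply, smul_eq_mul, mul_left_comm _ r]
    exact ⟨mul_pos hr hx.1, mul_le_mul_of_nonneg_left hx.2.1 hr.le,
      mul_le_mul_of_nonneg_left hx.2.2 hr.le⟩
  add_mem' x hx y hy := by
    simp only [Set.mem_ofPred_eq, Pi.add_apply, mul_add]
    exact ⟨add_pos hx.1 hy.1, add_le_add hx.2.1 hy.2.1, add_le_add hx.2.2 hy.2.2⟩

theorem measurableSet_sector (α β : ℝ) : MeasurableSet (sector α β : Set (Fin 2 → ℝ)) :=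
  (measurableSet_lt (f := fun _ => 0) (g := fun x : Fin 2 → ℝ => x 0) (by fun_prop)
    (by fun_prop)).inter <|
  (measurableSet_le (f := fun x : Fin 2 → ℝ => α * x 0) (g := fun x => x 1) (by fun_prop)
    (by fun_prop)).inter <|
  measurableSet_le (f := fun x : Fin 2 → ℝ => x 1) (g := fun x => β * x 0) (by fun_prop)
    (by fun_prop)

theorem volume_real_diskPart_sector {α β : ℝ} (hαβ : α ≤ β) :
    volume.real (diskPart (sector α β) 1) = (Real.arctan β - Real.arctan α) / 2 := by
  have e := (volume_preserving_finTwoArrow ℝ).symm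
  have hD := measurableSet_diskPart _ (measurableSet_sector α β) 1
  rw [← e.measureReal_preimage hD.nullMeasurableSet,
    volume_real_eq_half_of_polar (e.measurable hD) measurableSet_Icc
      (T := Set.Icc (Real.arctan α) (Real.arctan β))]
  · rw [Real.volume_real_Icc_of_le (Real.arctan_mono hαβ)]
  · exact Set.Icc_subset_Ioo (by linarith [Real.neg_pi_div_two_lt_arctan α, Real.pi_pos])
      (by linarith [Real.arctan_lt_pi_div_two β, Real.pi_pos])
  · rintro ⟨r, φ⟩ ⟨hr, hφ⟩
    have hr : 0 < r := hr
    rw [← slope_mem_Icc_iff_arctan hφ]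
    have hsq : (r * Real.cos φ) ^ 2 + (r * Real.sin φ) ^ 2 ≤ 1 ↔ r ≤ 1 := by
      rw [mul_pow, mul_pow, ← mul_add, Real.cos_sq_add_sin_sq, mul_one, sq_le_one_iff₀ hr.le]
    have hsector : (0 < r * Real.cos φ ∧ α * (r * Real.cos φ) ≤ r * Real.sin φ ∧
        r * Real.sin φ ≤ β * (r * Real.cos φ)) ↔
        (0 < Real.cos φ ∧ α * Real.cos φ ≤ Real.sin φ ∧ Real.sin φ ≤ β * Real.cos φ) := by
      simp only [mul_left_comm _ r, mul_pos_iff_of_pos_left hr, mul_le_mul_iff_right₀ hr]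
    exact (and_congr hsector hsq).trans and_comm

/-- The coprime pairs `(m, n)` of opposite parity in the sector `0 < m`, `α ≤ n / m ≤ β` of the
disk `m ^ 2 + n ^ 2 ≤ c`. -/
def oddCoprimePairs (α β c : ℝ) : Set (ℤ × ℤ) :=
  {p | Int.gcd p.1 p.2 = 1 ∧ 0 < p.1 ∧ α ≤ (p.2 : ℝ) / p.1 ∧ (p.2 : ℝ) / p.1 ≤ β ∧
    Odd (p.1 - p.2) ∧ (p.1 : ℝ) ^ 2 + (p.2 : ℝ) ^ 2 ≤ c}

theorem mem_oddPoints_sector_iff {α β c : ℝ} {v : Fin 2 → ℤ} :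
    v ∈ oddPoints (sector α β) c ↔ 0 < v 0 ∧ α ≤ (v 1 : ℝ) / v 0 ∧ (v 1 : ℝ) / v 0 ≤ β ∧
      Odd (v 0 - v 1) ∧ (v 0 : ℝ) ^ 2 + (v 1 : ℝ) ^ 2 ≤ c := by
  have hslope (h : 0 < v 0) : (α * v 0 ≤ v 1 ∧ (v 1 : ℝ) ≤ β * v 0) ↔
      (α ≤ (v 1 : ℝ) / v 0 ∧ (v 1 : ℝ) / v 0 ≤ β) := by
    have h' : (0 : ℝ) < v 0 := mod_cast h
    rw [le_div_iff₀ h', div_le_iff₀ h']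
  have hparity : Odd (v 0 - v 1) ↔ Odd (v 0 + v 1) := by
    rw [Int.odd_sub, Int.odd_add]
  have hpos : (0 : ℝ) < v 0 ↔ 0 < v 0 := Int.cast_pos
  change (((0 : ℝ) < v 0 ∧ α * v 0 ≤ v 1 ∧ (v 1 : ℝ) ≤ β * v 0) ∧ _ ≤ c) ∧ _ ↔ _
  rw [hparity, hpos, and_congr_right_iff.mpr hslope]
  simp only [and_assoc, and_comm, and_left_comm, Function.comp_apply]

theorem ncard_oddCoprimePairs (α β c : ℝ) :
    (oddCoprimePairs α β c).ncard =
      {v ∈ oddPoints (sector α β) c | Int.gcd (v 0) (v 1) = 1}.ncard := by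
  rw [← Set.ncard_preimage_of_injective_subset_range (finTwoArrowEquiv ℤ).injective
    (by simp only [Equiv.range_eq_univ, Set.subset_univ])]
  congr 1
  ext v
  exact and_comm.trans (and_congr_left' mem_oddPoints_sector_iff.symm)

theorem coprime_pairs_sector_count_general {α β : ℝ} (hαβ : α ≤ β) :
    Tendsto (fun c : ℝ => ((oddCoprimePairs α β c).ncard : ℝ) / c) atTop
      (nhds (2 / Real.pi ^ 2 * (Real.arctan β - Real.arctan α))) := by
  simp only [ncard_oddCoprimePairs]
  convert tendsto_ncard_coprime_oddPoints_div (measurableSet_sector α β) using 2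
  rw [volume_real_diskPart_sector hαβ]
  ring

end Sector

theorem tendsto_ncard_sdiff_singleton_div {σ : Type*} {A : ℝ → Set σ} {L : ℝ}
    (h : Tendsto (fun c => ((A c).ncard : ℝ) / c) atTop (nhds L)) (a : σ) :
    Tendsto (fun c => ((A c \ {a}).ncard : ℝ) / c) atTop (nhds L) := by
  have hpred : Tendsto (fun c => ((A c).ncard : ℝ) / c - 1 / c) atTop (nhds L) := by
    simpa only [sub_zero, id_eq] using h.sub (tendsto_const_nhds.div_atTop tendsto_id)
  refine tendsto_of_tendsto_of_tendsto_of_le_of_le' hpred h ?_ ?_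
  · filter_upwards [eventually_ge_atTop 0] with c hc
    rw [← sub_div]
    gcongr
    have := Set.pred_ncard_le_ncard_sdiff_singleton (A c) a
    rw [tsub_le_iff_right] at this
    exact sub_le_iff_le_add.mpr (mod_cast this)
  · filter_upwards [eventually_ge_atTop 0] with c hc
    refine div_le_div_of_nonneg_right (Nat.cast_le.mpr ?_) hc
    exact Set.ncard_sdiff_singleton_le (A c) a

theorem arctan_sub_div_one_add_mul {x y : ℝ} (h : -1 < x * y) :
    Real.arctan ((y - x) / (1 + x * y)) = Real.arctan y - Real.arctan x := by
  have := Real.arctan_add (x := y) (y := -x) (by linarith)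
  rw [Real.arctan_neg, ← sub_eq_add_neg, ← sub_eq_add_neg] at this
  rw [this]
  ring_nf

/- `β ≤ 1` forces `n ≤ m`, so that the truncated difference `m - n` is the true one. -/
theorem natCast_mem_oddCoprimePairs_iff {α β : ℝ} (hβ : β ≤ 1) {m n N : ℕ} :
    ((m : ℤ), (n : ℤ)) ∈ oddCoprimePairs α β N ↔ Nat.gcd m n = 1 ∧ 1 ≤ m ∧
      α ≤ (n : ℝ) / m ∧ (n : ℝ) / m ≤ β ∧ Odd (m - n) ∧ m ^ 2 + n ^ 2 ≤ N := by
  have hodd (hm : 1 ≤ m) (h : (n : ℝ) / m ≤ β) : Odd ((m : ℤ) - n) ↔ Odd (m - n) := by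
    have hm' : (0 : ℝ) < m := mod_cast hm
    have hnm : n ≤ m := mod_cast (div_le_one₀ hm').mp (h.trans hβ)
    rw [← Nat.cast_sub hnm, Int.odd_coe_nat]
  have hnorm : (m : ℝ) ^ 2 + (n : ℝ) ^ 2 ≤ N ↔ m ^ 2 + n ^ 2 ≤ N := by norm_cast
  simp only [oddCoprimePairs, Set.mem_ofPred_eq, Int.gcd_natCast_natCast, Int.cast_natCast, hnorm,
    Int.natCast_pos]
  refine and_congr_right fun _ => and_congr_right fun hm => and_congr_right fun _ =>
    and_congr_right fun h => and_congr_left' (hodd hm h)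

theorem snd_pos_of_mem_oddCoprimePairs {α β c : ℝ} (hα : 0 ≤ α) {p : ℤ × ℤ}
    (hp : p ∈ oddCoprimePairs α β c) (hne : p ≠ (1, 0)) : 0 < p.2 := by
  obtain ⟨hgcd, hpos, hslope, -⟩ := hp
  have hpos' : (0 : ℝ) < p.1 := mod_cast hpos
  have hnonneg : 0 ≤ p.2 := by
    have h := (le_div_iff₀ hpos').mp (hα.trans hslope)
    rw [zero_mul] at h
    exact mod_cast h
  refine hnonneg.lt_of_ne' fun h0 => hne (Prod.ext ?_ h0)
  rw [h0, Int.gcd_zero_right] at hgcd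
  omega

theorem ncard_natPairs_eq_ncard_oddCoprimePairs_sdiff {α β : ℝ} (hα : 0 ≤ α) (hβ : β ≤ 1)
    (N : ℕ) :
    {p : ℕ × ℕ | Nat.gcd p.1 p.2 = 1 ∧ 1 ≤ p.1 ∧ 1 ≤ p.2 ∧
        α ≤ (p.2 : ℝ) / (p.1 : ℝ) ∧ (p.2 : ℝ) / (p.1 : ℝ) ≤ β ∧
        Odd (p.1 - p.2) ∧ p.1 ^ 2 + p.2 ^ 2 ≤ N}.ncard =
      (oddCoprimePairs α β N \ {(1, 0)}).ncard := by
  have hinj : Function.Injective (Prod.map Nat.cast Nat.cast : ℕ × ℕ → ℤ × ℤ) :=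
    Nat.cast_injective.prodMap Nat.cast_injective
  rw [← Set.ncard_image_of_injective _ hinj]
  congr 1
  ext p
  constructor
  · rintro ⟨q, ⟨hgcd, hm, hn, h⟩, rfl⟩
    refine ⟨(natCast_mem_oddCoprimePairs_iff hβ).mpr ⟨hgcd, hm, h⟩, fun heq => ?_⟩
    have := congrArg Prod.snd heq
    simp only [Prod.map_snd, Nat.cast_eq_zero] at this
    omega
  · rintro ⟨hp, hne⟩
    obtain ⟨m, hm⟩ := Int.eq_ofNat_of_zero_le hp.2.1.le
    have hpos := snd_pos_of_mem_oddCoprimePairs hα hp hne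
    obtain ⟨n, hn⟩ := Int.eq_ofNat_of_zero_le hpos.le
    obtain rfl : ((m : ℤ), (n : ℤ)) = p := Prod.ext hm.symm hn.symm
    obtain ⟨hgcd, hm, h⟩ := (natCast_mem_oddCoprimePairs_iff hβ).mp hp
    exact ⟨(m, n), ⟨hgcd, hm, Int.natCast_pos.mp hpos, h⟩, rfl⟩

/-- **Counting coprime pairs of different parity in a circular sector.**  For
`0 ≤ α < β ≤ 1`, the number of coprime pairs `(m,n)` of positive integers with `m - n` odd,
`α ≤ n/m ≤ β` and `m² + n² ≤ N` satisfies
`lim_{N→∞} (1/N)·|P(N;α,β)| = (2/π²)·arctan((β−α)/(1+αβ))`. -/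
theorem coprime_pairs_sector_count (α β : ℝ) (hα : 0 ≤ α) (hαβ : α < β) (hβ : β ≤ 1) :
    Tendsto
      (fun N : ℕ =>
        (1 : ℝ) / N *
          ({p : ℕ × ℕ | Nat.gcd p.1 p.2 = 1 ∧ 1 ≤ p.1 ∧ 1 ≤ p.2 ∧
              α ≤ (p.2 : ℝ) / (p.1 : ℝ) ∧ (p.2 : ℝ) / (p.1 : ℝ) ≤ β ∧
              Odd (p.1 - p.2) ∧ p.1 ^ 2 + p.2 ^ 2 ≤ N}.ncard : ℝ))
      atTop (nhds (2 / Real.pi ^ 2 * Real.arctan ((β - α) / (1 + α * β)))) := by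
  rw [arctan_sub_div_one_add_mul (by linarith [mul_nonneg hα (hα.trans hαβ.le)])]
  refine ((tendsto_ncard_sdiff_singleton_div (coprime_pairs_sector_count_general hαβ.le)
    (1, 0)).comp tendsto_natCast_atTop_atTop).congr fun N => ?_
  rw [ncard_natPairs_eq_ncard_oddCoprimePairs_sdiff hα hβ, one_div_mul_eq_div, Function.comp_apply]
end
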